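/- arXiv:1608.01463 — 4 statements merged into one kernel-verified Lean document; each statement's English description precedes it below -/
import Mathlib

section
/- Let G be a multigraph without self-loops, with n vertices and m edges, and let k ≥ 0 and d be integers. Suppose that every vertex v of G satisfies 3 ≤ d(v) ≤ d. If n > dk + k or m > 2dk, then every feedback vertex set of G has size greater than k, i.e., fvs(G) > k. -/
/-- A multigraph on vertex type `V` with edge type `E`: each edge has an
unordered pair of endpoints.  Parallel edges are distinguished (they are
different elements of `E`), and self-loops are edges whose endpoint pair is
diagonal. -/
structure Multigraph (V : Type) (E : Type) where
  ends : E → Sym2 V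

namespace Multigraph

variable {V E : Type}

/-- A multigraph has no self-loops. -/
def LoopFree (G : Multigraph V E) : Prop := ∀ e : E, ¬ (G.ends e).IsDiag

/-- The degree of a vertex: the number of incident edges (parallel edges
counted with multiplicity). -/
noncomputable def degree (G : Multigraph V E) (v : V) : ℕ :=
  Nat.card {e : E // v ∈ G.ends e}

/-- A walk `(v₀, e₁, v₁, …, e_l, v_l)` of positive length `l ≥ 1` in which
each edge `eᵢ` joins `v_{i-1}` and `vᵢ`. -/
structure Walk (G : Multigraph V E) where
  len : ℕ
  len_pos : 0 < len
  verts : Fin (len + 1) → V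
  edges : Fin len → E
  valid : ∀ i : Fin len, G.ends (edges i) = s(verts i.castSucc, verts i.succ)

namespace Walk

variable {G : Multigraph V E}

/-- The first vertex of a walk. -/
def start (W : G.Walk) : V := W.verts 0

/-- The last vertex of a walk. -/
def finish (W : G.Walk) : V := W.verts (Fin.last W.len)

/-- A cycle: a closed walk of positive length with pairwise distinct edges and
pairwise distinct vertices (except that the first and last vertex coincide). -/
def IsCycle (W : G.Walk) : Prop :=
  W.start = W.finish ∧ Function.Injective W.edges ∧
    Function.Injective fun i : Fin W.len => W.verts i.castSucc

/-- An `s`-cycle: a walk with `v₀ = v_l = s`, with `vᵢ ≠ s` for `0 < i < l`,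
with no U-turns (`eᵢ ≠ e_{i+1}`), and in which every edge occurs at most
twice. -/
def IsSCycle (W : G.Walk) (s : V) : Prop :=
  W.start = s ∧ W.finish = s ∧
  (∀ i : Fin (W.len + 1), i ≠ 0 → i ≠ Fin.last W.len → W.verts i ≠ s) ∧
  (∀ i j : Fin W.len, (i : ℕ) + 1 = (j : ℕ) → W.edges i ≠ W.edges j) ∧
  (∀ e : E, Nat.card {i : Fin W.len // W.edges i = e} ≤ 2)

/-- The multiplicity of a vertex `v` in the multiset `V(W)` of vertices of a
walk `W`. -/
noncomputable def vertCount (W : G.Walk) (v : V) : ℕ :=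
  Nat.card {i : Fin (W.len + 1) // W.verts i = v}

end Walk

/-- `S` is a feedback vertex set: every cycle of `G` meets `S`
(equivalently, `G − S` contains no cycle). -/
def IsFVS (G : Multigraph V E) (S : Set V) : Prop :=
  ∀ W : G.Walk, W.IsCycle → ∃ i, W.verts i ∈ S

/-- The minimum size of a feedback vertex set. -/
noncomputable def fvs [Fintype V] (G : Multigraph V E) : ℕ :=
  sInf {n : ℕ | ∃ S : Set V, G.IsFVS S ∧ S.ncard = n}

/-- `x : V → ℝ≥0` is an `s`-cycle cover: `x s = 0` and every `s`-cycle `C`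
satisfies `x(V(C)) ≥ 1` (vertices counted with multiplicity). -/
def IsSCycleCover (G : Multigraph V E) (s : V) (x : V → ℝ) : Prop :=
  (∀ v, 0 ≤ x v) ∧ x s = 0 ∧
    ∀ W : G.Walk, W.IsSCycle s → 1 ≤ ∑ i, x (W.verts i)

/-- A function is half-integral if it takes values in `{0, 1/2, 1}`. -/
def HalfIntegral (x : V → ℝ) : Prop := ∀ v, x v = 0 ∨ x v = 1/2 ∨ x v = 1

/-- A minimum `s`-cycle cover. -/
def IsMinSCycleCover [Fintype V] (G : Multigraph V E) (s : V) (x : V → ℝ) : Prop :=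
  G.IsSCycleCover s x ∧ ∀ x' : V → ℝ, G.IsSCycleCover s x' → ∑ v, x v ≤ ∑ v, x' v

/-- An `s`-cycle packing: a nonnegative, finitely supported weighting of the
`s`-cycles such that every vertex `v ≠ s` is used (with multiplicity) with
total weight at most `1`. -/
def IsSCyclePacking (G : Multigraph V E) (s : V) (y : G.Walk →₀ ℝ) : Prop :=
  (∀ W, 0 ≤ y W) ∧ (∀ W, y W ≠ 0 → W.IsSCycle s) ∧
    ∀ v : V, v ≠ s → ∑ W ∈ y.support, (W.vertCount v : ℝ) * y W ≤ 1

/-- The size of an `s`-cycle packing. -/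
noncomputable def packingSize {G : Multigraph V E} (y : G.Walk →₀ ℝ) : ℝ :=
  ∑ W ∈ y.support, y W

/-- Number of edges incident to `v` with `f`-value 1. -/
noncomputable def cnt1 (G : Multigraph V E) (f : E → ℝ) (v : V) : ℕ :=
  Nat.card {e : E // v ∈ G.ends e ∧ f e = 1}

/-- Number of edges incident to `v` with `f`-value 1/2. -/
noncomputable def cntH (G : Multigraph V E) (f : E → ℝ) (v : V) : ℕ :=
  Nat.card {e : E // v ∈ G.ends e ∧ f e = 1/2}

/-- type-O: all incident edges have `f`-value 0. -/
def IsTypeO (G : Multigraph V E) (f : E → ℝ) (v : V) : Prop :=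
  ∀ e : E, v ∈ G.ends e → f e = 0

/-- type-I: exactly two incident edges have value 1 and none has value 1/2. -/
def IsTypeI (G : Multigraph V E) (f : E → ℝ) (v : V) : Prop :=
  G.cnt1 f v = 2 ∧ G.cntH f v = 0

/-- type-H: no incident edge has value 1 and exactly two have value 1/2. -/
def IsTypeH (G : Multigraph V E) (f : E → ℝ) (v : V) : Prop :=
  G.cnt1 f v = 0 ∧ G.cntH f v = 2

/-- type-T: exactly one incident edge has value 1 and exactly two have value 1/2. -/
def IsTypeT (G : Multigraph V E) (f : E → ℝ) (v : V) : Prop :=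
  G.cnt1 f v = 1 ∧ G.cntH f v = 2

/-- A basic `s`-cycle packing: `f : E → {0,1/2,1}` with `f(e) ∈ {0,1}` on edges
incident to `s`, every vertex `v ≠ s` of one of the four types O, I, H, T, and
every cycle consisting of edges of value 1/2 (i.e. every half-integral cycle)
containing an odd number of type-T vertices. -/
def IsBasicSCyclePacking (G : Multigraph V E) (s : V) (f : E → ℝ) : Prop :=
  (∀ e : E, f e = 0 ∨ f e = 1/2 ∨ f e = 1) ∧
  (∀ e : E, s ∈ G.ends e → f e = 0 ∨ f e = 1) ∧
  (∀ v : V, v ≠ s →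
    G.IsTypeO f v ∨ G.IsTypeI f v ∨ G.IsTypeH f v ∨ G.IsTypeT f v) ∧
  (∀ W : G.Walk, W.IsCycle → (∀ j, f (W.edges j) = 1/2) →
    Odd (Nat.card {i : Fin W.len // G.IsTypeT f (W.verts i.castSucc)}))

/-- The size of a basic `s`-cycle packing: `(1/2) · Σ_{e ∈ δ(s)} f(e)`. -/
noncomputable def basicSize [Fintype E] (G : Multigraph V E) (s : V) (f : E → ℝ) : ℝ :=
  (1/2) * ∑ e : E, Set.indicator {e' : E | s ∈ G.ends e'} f e

/-- `u` and `v` are connected by a walk avoiding the vertex set `S` and the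
edge set `F` (or `u = v`). -/
def Reach (G : Multigraph V E) (S : Set V) (F : Set E) (u v : V) : Prop :=
  u = v ∨ ∃ W : G.Walk, (∀ i, W.verts i ∉ S) ∧ (∀ j, W.edges j ∉ F) ∧
    W.start = u ∧ W.finish = v

/-- The edge `e` belongs to the set `B` of the `s`-cycle cover reduction with
respect to the set `X`: `e` joins `s` to some `u ∉ X`, `e` is a bridge of
`G − X` (its endpoints are disconnected in `G − X − e`), and the connected
component of `u` in `G − X − s` is a tree (no cycle of `G − X − s` passes
through a vertex reachable from `u` in `G − X − s`). -/
def InB (G : Multigraph V E) (s : V) (X : Set V) (e : E) : Prop :=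
  ∃ u : V, G.ends e = s(s, u) ∧ u ≠ s ∧ u ∉ X ∧ s ∉ X ∧
    ¬ G.Reach X {e} s u ∧
    ¬ ∃ W : G.Walk, W.IsCycle ∧ (∀ i, W.verts i ∉ X ∪ {s}) ∧
        G.Reach (X ∪ {s}) ∅ u W.start

/-- The graph `G' = (V, E')` obtained from `G` by the `s`-cycle cover
reduction with respect to a half-integral `s`-cycle cover `x`: with
`X = x⁻¹(1)`, insert a double edge (two new parallel edges) between `s` and
each `v ∈ X`, and delete the edges of `B`. -/
def reduced (G : Multigraph V E) (s : V) (x : V → ℝ) :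
    Multigraph V ({e : E // ¬ G.InB s {v : V | x v = 1} e} ⊕ ({v : V // x v = 1} × Bool)) where
  ends := fun e =>
    match e with
    | .inl e' => G.ends e'.val
    | .inr p => s(s, p.1.val)

/-- The graph `G − s` obtained by deleting the vertex `s` and all incident
edges (the vertex `s` is kept as an isolated vertex). -/
def deleteVertex (G : Multigraph V E) (s : V) :
    Multigraph V {e : E // s ∉ G.ends e} where
  ends := fun e => G.ends e.val

/-- An `f`-augmenting walk for a basic `s`-cycle packing `f`:
(1) it starts at `s`; (2) its first edge has value 0; (3) its edges are
pairwise distinct; (4) its vertices `v₀,…,v_{l-1}` are pairwise distinct;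
(5) each interior vertex `vᵢ` (`1 ≤ i ≤ l-1`) is type-O, or type-I with
`f(e) = 1` for at least one of `e ∈ {eᵢ, e_{i+1}}`; (6) if the last vertex
`v_l` equals `vᵢ` for some `i < l` then: `v_l = s` and `f(e_l) = 0`, or `v_l`
is type-O, or `v_l` is type-I and `f(e) = 1` for at least one of
`e ∈ {eᵢ, e_l}`; (7) if `v_l` is a new vertex then it is type-H or type-T. -/
def IsAugmentingWalk (G : Multigraph V E) (s : V) (f : E → ℝ) (W : G.Walk) : Prop :=
  W.start = s ∧
  f (W.edges ⟨0, W.len_pos⟩) = 0 ∧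
  Function.Injective W.edges ∧
  Function.Injective (fun i : Fin W.len => W.verts i.castSucc) ∧
  (∀ i : Fin W.len, 0 < i.val →
    (G.IsTypeO f (W.verts i.castSucc) ∨
      (G.IsTypeI f (W.verts i.castSucc) ∧
        (f (W.edges ⟨i.val - 1, Nat.lt_of_le_of_lt (Nat.sub_le _ _) i.isLt⟩) = 1 ∨
          f (W.edges i) = 1)))) ∧
  (∀ i : Fin W.len, W.finish = W.verts i.castSucc →
    ((W.finish = s ∧ f (W.edges ⟨W.len - 1, Nat.sub_lt W.len_pos Nat.one_pos⟩) = 0) ∨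
     (W.finish ≠ s ∧ G.IsTypeO f W.finish) ∨
     (W.finish ≠ s ∧ G.IsTypeI f W.finish ∧
       (f (W.edges ⟨i.val - 1, Nat.lt_of_le_of_lt (Nat.sub_le _ _) i.isLt⟩) = 1 ∨
         f (W.edges ⟨W.len - 1, Nat.sub_lt W.len_pos Nat.one_pos⟩) = 1)))) ∧
  ((∀ i : Fin W.len, W.finish ≠ W.verts i.castSucc) →
    (G.IsTypeH f W.finish ∨ G.IsTypeT f W.finish))

/-- `g = f_W` is obtained from `f` by augmenting along the walk `W`.
If `v_l = s` (so `h = l`), the values of `f` on `e₁,…,e_l` are flipped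
(`f ↦ 1 − f`).  If `v_l ≠ s` equals an earlier vertex `vᵢ` (so `h = i`), the
values on `e₁,…,e_h` are flipped and the values on `e_{h+1},…,e_l` are set to
`1/2`.  If `v_l ≠ s` is a new vertex (type-H or type-T, with `h = l`), the
values on `e₁,…,e_l` are flipped and, on the half-integral cycle `C` of `v_l`
(traversed from `t₀ = v_l` in either direction), the edges of the segment
`Pᵢ` between consecutive markers `tᵢ, t_{i+1}` (the markers being `v_l`
together with the type-T vertices of `C`) receive value `0` for even `i` and
`1` for odd `i`; the segment index of an edge is the number of type-T
vertices strictly preceding it along the traversal.  All other edges keep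
their `f`-value. -/
def AugmentedAlong (G : Multigraph V E) (s : V) (f : E → ℝ) (W : G.Walk) (g : E → ℝ) : Prop :=
  -- Case A : the walk returns to `s`.
  (W.finish = s ∧
    (∀ j : Fin W.len, g (W.edges j) = 1 - f (W.edges j)) ∧
    (∀ e : E, (∀ j, e ≠ W.edges j) → g e = f e)) ∨
  -- Case B : the last vertex is a repeated vertex `vᵢ ≠ s` (type-O or type-I).
  (W.finish ≠ s ∧
    (∃ i : Fin W.len, W.finish = W.verts i.castSucc ∧
      (∀ j : Fin W.len, j.val < i.val → g (W.edges j) = 1 - f (W.edges j)) ∧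
      (∀ j : Fin W.len, i.val ≤ j.val → g (W.edges j) = 1/2) ∧
      (∀ e : E, (∀ j, e ≠ W.edges j) → g e = f e))) ∨
  -- Case C : the last vertex is a new vertex of type-H or type-T.
  (W.finish ≠ s ∧ (∀ i : Fin W.len, W.finish ≠ W.verts i.castSucc) ∧
    (∃ C : G.Walk, C.IsCycle ∧ C.verts 0 = W.finish ∧
      (∀ j, f (C.edges j) = 1/2) ∧
      (∀ j : Fin W.len, g (W.edges j) = 1 - f (W.edges j)) ∧
      (∀ j : Fin C.len,
        g (C.edges j) =
          if Even (Nat.card {m : Fin C.len //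
              1 ≤ m.val ∧ m.val ≤ j.val ∧ G.IsTypeT f (C.verts m.castSucc)})
          then 0 else 1) ∧
      (∀ e : E, (∀ j, e ≠ W.edges j) → (∀ j, e ≠ C.edges j) → g e = f e)))


end Multigraph

/-!
If `S` is a feedback vertex set, then `G - S` is a forest, so it has at most `n - |S|` edges.
Write `m'` for the number of these edges and `D` for the sum of the degrees over `S`. Every other
edge meets `S`, whence `m ≤ D + m'`. Counting incidences with the vertices outside `S`, where an
edge meeting `S` contributes at most one and an edge of `G - S` at most two, gives
`3 (n - |S|) ≤ m + m'`. Therefore `n - |S| ≤ D` and `m ≤ 2 D`, while `D ≤ d |S|`.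
-/

namespace Multigraph

variable {V E : Type}

open Finset

/-- The underlying simple graph of a multigraph: self-loops are dropped and parallel edges
identified. It makes Mathlib's results on acyclic graphs available. -/
def toSimpleGraph (G : Multigraph V E) : SimpleGraph V :=
  SimpleGraph.fromEdgeSet (Set.range G.ends)

/-- The edges of the subgraph induced by `T`, i.e. those with both ends in `T`; taking `T = Sᶜ`
gives the edges of `G - S`. -/
def inducedEdges (G : Multigraph V E) (T : Set V) : Set E :=
  {e | ∀ v ∈ G.ends e, v ∈ T}

variable {G : Multigraph V E} {S : Set V}

theorem exists_isCycle_of_isDiag {e : E} (he : (G.ends e).IsDiag) :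
    ∃ W : G.Walk, W.IsCycle ∧ ∀ i, W.verts i ∈ G.ends e := by
  let u := (G.ends e).diagElem he
  have hu : G.ends e = s(u, u) := ((G.ends e).diag_diagElem he).symm
  let W : G.Walk :=
    { len := 1
      len_pos := one_pos
      verts := fun _ ↦ u
      edges := fun _ ↦ e
      valid := fun _ ↦ hu }
  exact ⟨W, ⟨rfl, Function.injective_of_subsingleton (α := Fin 1) _,
    Function.injective_of_subsingleton (α := Fin 1) _⟩, fun _ ↦ hu ▸ Sym2.mem_mk_left u u⟩

theorem exists_isCycle_of_ends_eq {e f : E} (hne : e ≠ f) (hends : G.ends e = G.ends f) :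
    ∃ W : G.Walk, W.IsCycle ∧ ∀ i, W.verts i ∈ G.ends e := by
  by_cases hdiag : (G.ends e).IsDiag
  · exact exists_isCycle_of_isDiag hdiag
  obtain ⟨u, v, he⟩ : ∃ u v, G.ends e = s(u, v) := Sym2.exists.1 ⟨_, rfl⟩
  have huv : u ≠ v := by simpa [he] using hdiag
  let W : G.Walk :=
    { len := 2
      len_pos := two_pos
      verts := ![u, v, u]
      edges := ![e, f]
      valid := Fin.forall_fin_two.2 ⟨he, by simp [← hends, he, Sym2.eq_swap]⟩ }
  have hverts : (fun i : Fin 2 ↦ W.verts i.castSucc) = ![u, v] :=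
    funext <| Fin.forall_fin_two.2 ⟨rfl, rfl⟩
  refine ⟨W, ⟨rfl, injective_pair_iff_ne.2 hne, ?_⟩, ?_⟩
  · exact hverts ▸ injective_pair_iff_ne.2 huv
  · rw [he]
    exact Fin.forall_fin_succ.2 ⟨Sym2.mem_mk_left u v,
      Fin.forall_fin_two.2 ⟨Sym2.mem_mk_right u v, Sym2.mem_mk_left u v⟩⟩

theorem exists_isCycle_of_toSimpleGraph {v : V} {c : G.toSimpleGraph.Walk v v} (hc : c.IsCycle) :
    ∃ W : G.Walk, W.IsCycle ∧ ∀ i, W.verts i ∈ c.support := by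
  have hedge (i : Fin c.length) : ∃ e, G.ends e = s(c.getVert i, c.getVert (i + 1)) :=
    ((SimpleGraph.fromEdgeSet_adj _).1 (c.adj_getVert_succ i.2)).1
  choose edge hedge using hedge
  have edge_injective : Function.Injective edge := fun i j hij ↦ by
    have hi : i.1 < c.edges.length := by simp
    have hj : j.1 < c.edges.length := by simp
    have : c.edges[i.1] = c.edges[j.1] := by
      rw [SimpleGraph.Walk.getElem_edges, SimpleGraph.Walk.getElem_edges, ← hedge, ← hedge, hij]
    exact Fin.ext (hc.edges_nodup.getElem_inj_iff.1 this)
  have getVert_injective : Function.Injective fun i : Fin c.length ↦ c.getVert i :=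
    fun i j hij ↦ Fin.ext <| hc.getVert_injOn' (Nat.le_sub_one_of_lt i.2)
      (Nat.le_sub_one_of_lt j.2) hij
  let W : G.Walk :=
    { len := c.length
      len_pos := hc.three_le_length.trans_lt' three_pos
      verts := fun i ↦ c.getVert i
      edges := edge
      valid := hedge }
  exact ⟨W, ⟨by simp [W, Walk.start, Walk.finish], edge_injective, getVert_injective⟩,
    fun i ↦ c.getVert_mem_support i⟩

theorem IsFVS.not_isDiag (hS : G.IsFVS S) {e : E} (he : e ∈ G.inducedEdges Sᶜ) :
    ¬ (G.ends e).IsDiag := fun hdiag ↦ by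
  obtain ⟨W, hW, hWe⟩ := exists_isCycle_of_isDiag hdiag
  obtain ⟨i, hi⟩ := hS W hW
  exact he _ (hWe i) hi

theorem IsFVS.injOn_ends (hS : G.IsFVS S) : Set.InjOn G.ends (G.inducedEdges Sᶜ) := by
  intro e he f _ hends
  by_contra hne
  obtain ⟨W, hW, hWe⟩ := exists_isCycle_of_ends_eq hne hends
  obtain ⟨i, hi⟩ := hS W hW
  exact he _ (hWe i) hi

theorem IsFVS.isAcyclic_induce_compl (hS : G.IsFVS S) :
    (G.toSimpleGraph.induce Sᶜ).IsAcyclic := by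
  intro v c hc
  let ι := SimpleGraph.Embedding.induce (G := G.toSimpleGraph) Sᶜ
  obtain ⟨W, hW, hWc⟩ := exists_isCycle_of_toSimpleGraph (hc.map (f := ι.toHom) ι.injective)
  obtain ⟨i, hi⟩ := hS W hW
  obtain ⟨u, -, hu⟩ := List.mem_map.1 (c.support_map ι.toHom ▸ hWc i)
  exact u.2 (show ι u ∈ S from hu ▸ hi)

theorem ncard_edgeSet_le_of_isAcyclic {α : Type*} [Finite α] {H : SimpleGraph α}
    (hH : H.IsAcyclic) : H.edgeSet.ncard ≤ Nat.card α := by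
  classical
  have := Fintype.ofFinite α
  cases isEmpty_or_nonempty α
  · simp [Set.eq_empty_of_isEmpty]
  · obtain ⟨T, hHT, -, hT⟩ :=
      SimpleGraph.connected_top.exists_isTree_le_of_le_of_isAcyclic le_top hH
    calc
      H.edgeSet.ncard ≤ T.edgeSet.ncard :=
        Set.ncard_le_ncard (SimpleGraph.edgeSet_mono hHT) (Set.toFinite _)
      _ = #T.edgeFinset := by rw [← SimpleGraph.coe_edgeFinset, Set.ncard_coe_finset]
      _ ≤ Nat.card α := by rw [Nat.card_eq_fintype_card, ← hT.card_edgeFinset]; exact Nat.le_succ _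

theorem IsFVS.image_ends_inducedEdges_subset (hS : G.IsFVS S) :
    G.ends '' G.inducedEdges Sᶜ ⊆
      Sym2.map Subtype.val '' (G.toSimpleGraph.induce Sᶜ).edgeSet := by
  rintro _ ⟨e, he, rfl⟩
  obtain ⟨u, v, huv⟩ : ∃ u v, G.ends e = s(u, v) := Sym2.exists.1 ⟨_, rfl⟩
  have hu : u ∈ Sᶜ := he u (huv ▸ Sym2.mem_mk_left u v)
  have hv : v ∈ Sᶜ := he v (huv ▸ Sym2.mem_mk_right u v)
  have hne : u ≠ v := by simpa [huv] using hS.not_isDiag he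
  have hadj : G.toSimpleGraph.Adj u v := (SimpleGraph.fromEdgeSet_adj _).2 ⟨⟨e, huv⟩, hne⟩
  exact ⟨s(⟨u, hu⟩, ⟨v, hv⟩), hadj, huv.symm⟩

theorem IsFVS.ncard_inducedEdges_le [Finite V] (hS : G.IsFVS S) :
    (G.inducedEdges Sᶜ).ncard ≤ Sᶜ.ncard :=
  calc
    (G.inducedEdges Sᶜ).ncard = (G.ends '' G.inducedEdges Sᶜ).ncard :=
      hS.injOn_ends.ncard_image.symm
    _ ≤ (Sym2.map Subtype.val '' (G.toSimpleGraph.induce Sᶜ).edgeSet).ncard :=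
      Set.ncard_le_ncard hS.image_ends_inducedEdges_subset (Set.toFinite _)
    _ ≤ (G.toSimpleGraph.induce Sᶜ).edgeSet.ncard := Set.ncard_image_le (Set.toFinite _)
    _ ≤ Sᶜ.ncard := ncard_edgeSet_le_of_isAcyclic hS.isAcyclic_induce_compl

section Counting

variable [Fintype E]

open scoped Classical in
theorem sum_degree_eq_sum_card_inter (G : Multigraph V E) (T : Finset V) :
    ∑ v ∈ T, G.degree v = ∑ e, #((G.ends e).toFinset ∩ T) := by
  have hdeg (v : V) : G.degree v = #{e | v ∈ G.ends e} := by
    rw [degree, Nat.card_eq_fintype_card, Fintype.card_subtype]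
  have hinter (e : E) : (G.ends e).toFinset ∩ T = {v ∈ T | v ∈ G.ends e} := by
    ext v; simp [and_comm]
  simp only [hdeg, hinter]
  exact sum_card_bipartiteAbove_eq_sum_card_bipartiteBelow (fun v e ↦ v ∈ G.ends e)

open scoped Classical in
theorem ncard_inducedEdges_eq_sum (G : Multigraph V E) (T : Set V) :
    (G.inducedEdges T).ncard = ∑ e, if e ∈ G.inducedEdges T then 1 else 0 := by
  rw [← card_filter, ← Set.ncard_coe_finset, coe_filter_univ]
  rfl

theorem sum_degree_le_card_edges_add (G : Multigraph V E) (T : Finset V) :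
    ∑ v ∈ T, G.degree v ≤ Fintype.card E + (G.inducedEdges T).ncard := by
  classical
  rw [sum_degree_eq_sum_card_inter, ncard_inducedEdges_eq_sum, Fintype.card_eq_sum_ones,
    ← sum_add_distrib]
  refine sum_le_sum fun e _ ↦ ?_
  have hcard : #(G.ends e).toFinset ≤ 2 := by rw [Sym2.card_toFinset]; split_ifs <;> simp
  split_ifs with he
  · exact (card_le_card inter_subset_left).trans hcard
  · obtain ⟨v, hve, hvT⟩ : ∃ v ∈ G.ends e, v ∉ T := by simpa [inducedEdges] using he
    have hssub : (G.ends e).toFinset ∩ T ⊂ (G.ends e).toFinset :=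
      ssubset_iff_subset_not_subset.2 ⟨inter_subset_left, fun hsub ↦
        hvT (mem_inter.1 (hsub (Sym2.mem_toFinset.2 hve))).2⟩
    exact Nat.le_of_lt_succ ((card_lt_card hssub).trans_le hcard)

theorem card_edges_le_sum_degree_add (G : Multigraph V E) (S : Finset V) :
    Fintype.card E ≤ ∑ v ∈ S, G.degree v + (G.inducedEdges (S : Set V)ᶜ).ncard := by
  classical
  rw [sum_degree_eq_sum_card_inter, ncard_inducedEdges_eq_sum, Fintype.card_eq_sum_ones,
    ← sum_add_distrib]
  refine sum_le_sum fun e _ ↦ ?_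
  split_ifs with he
  · exact Nat.le_add_left 1 _
  · obtain ⟨v, hve, hvS⟩ : ∃ v ∈ G.ends e, v ∈ S := by simpa [inducedEdges] using he
    exact card_pos.2 ⟨v, mem_inter.2 ⟨Sym2.mem_toFinset.2 hve, hvS⟩⟩

end Counting

theorem IsFVS.ncard_compl_le_sum_degree [Finite V] [Finite E] {S : Finset V} (hS : G.IsFVS S)
    (hdeg : ∀ v ∉ S, 3 ≤ G.degree v) : (S : Set V)ᶜ.ncard ≤ ∑ v ∈ S, G.degree v := by
  classical
  have := Fintype.ofFinite V
  have := Fintype.ofFinite E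
  have hforest := hS.ncard_inducedEdges_le
  have hedges := G.card_edges_le_sum_degree_add S
  have hincidences :=
    calc
      #Sᶜ * 3 ≤ ∑ v ∈ Sᶜ, G.degree v :=
        card_nsmul_le_sum _ _ _ fun v hv ↦ hdeg v (mem_compl.1 hv)
      _ ≤ Fintype.card E + (G.inducedEdges (Sᶜ : Finset V)).ncard :=
        G.sum_degree_le_card_edges_add Sᶜ
  simp only [← coe_compl, Set.ncard_coe_finset] at hforest hedges ⊢
  omega

theorem IsFVS.card_edges_le_two_mul_sum_degree [Finite V] [Fintype E] {S : Finset V}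
    (hS : G.IsFVS S) (hdeg : ∀ v ∉ S, 3 ≤ G.degree v) :
    Fintype.card E ≤ 2 * ∑ v ∈ S, G.degree v :=
  calc
    Fintype.card E ≤ ∑ v ∈ S, G.degree v + (G.inducedEdges (S : Set V)ᶜ).ncard :=
      G.card_edges_le_sum_degree_add S
    _ ≤ ∑ v ∈ S, G.degree v + ∑ v ∈ S, G.degree v := by
      gcongr
      exact hS.ncard_inducedEdges_le.trans (hS.ncard_compl_le_sum_degree hdeg)
    _ = 2 * ∑ v ∈ S, G.degree v := (two_mul _).symm

end Multigraph

theorem stmt0_fvs_gt_of_degree_bounds_general {V E : Type} [Fintype V] [Fintype E]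
    (G : Multigraph V E) (k d : ℕ) (S : Set V) (hS : G.IsFVS S)
    (hlow : ∀ v ∉ S, 3 ≤ G.degree v) (hhigh : ∀ v ∈ S, G.degree v ≤ d)
    (hsize : Fintype.card V > d * k + k ∨ Fintype.card E > 2 * d * k) :
    k < S.ncard := by
  lift S to Finset V using S.toFinite
  by_contra! hcard
  rw [Set.ncard_coe_finset] at hcard
  have hsum : ∑ v ∈ S, G.degree v ≤ d * k :=
    calc
      ∑ v ∈ S, G.degree v ≤ S.card * d := Finset.sum_le_card_nsmul _ _ _ hhigh
      _ ≤ d * k := by rw [mul_comm]; gcongr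
  have hvertices := hS.ncard_compl_le_sum_degree hlow
  have hedges := hS.card_edges_le_two_mul_sum_degree hlow
  have hcompl := Set.ncard_add_ncard_compl (S : Set V)
  rw [Set.ncard_coe_finset, Nat.card_eq_fintype_card] at hcompl
  rw [mul_assoc] at hsize
  omega

/-- if every vertex of a loop-free multigraph has degree between
`3` and `d`, and `n > dk + k` or `m > 2dk`, then every feedback vertex set has
size greater than `k`. -/
theorem stmt0_fvs_gt_of_degree_bounds {V E : Type} [Fintype V] [Fintype E]
    (G : Multigraph V E) (hloop : G.LoopFree) (k d : ℕ)
    (hdeg : ∀ v : V, 3 ≤ G.degree v ∧ G.degree v ≤ d)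
    (hsize : Fintype.card V > d * k + k ∨ Fintype.card E > 2 * d * k) :
    ∀ S : Set V, G.IsFVS S → k < S.ncard :=
  fun S hS ↦ stmt0_fvs_gt_of_degree_bounds_general G k d S hS (fun v _ ↦ (hdeg v).1)
    (fun v _ ↦ (hdeg v).2) hsize
end

section
/- Let G=(V,E) be a multigraph without self-loops and let s ∈ V. Then there exists an s-cycle cover x of G taking values only in {0, 1/2, 1} such that x(V) ≤ x'(V) for every s-cycle cover x' of G; that is, there exists a half-integral minimum s-cycle cover. -/
/-!
Given a cover `x`, let `d v` be the least `x`-weight of a path from `v` to `s`. Joining the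
geodesics from the two ends of an edge `uv` by that edge gives an `s`-cycle of weight `d u + d v`,
unless the edge is the first edge of one of the geodesics. Hence an `s`-cycle all of whose edges
satisfy `d u + d v < 1` would make a U-turn at its vertex farthest from `s`, so every `s`-cycle has
an edge with `1 ≤ d u + d v`.

Give `v` the value `1/2` for each of `θ` and `1 - θ` that lies in `(d v - x v, d v]`; for `θ`
uniform on `(0, 1)` the expected value is at most `x v`. By symmetry let `θ ≤ 1/2`. Since `d` grows
by at most `x v` on stepping to `v`, an `s`-cycle meets a vertex selected by `θ` on either side of
its heavy edge, or else an end `v` of that edge has `1 - θ ≤ d v`, and the selected vertices before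
and after `v` are distinct or both equal to `v`, which is then selected by `1 - θ` as well. So every
cover is matched by a half-integral one, and there are finitely many of those.
-/

namespace Multigraph

section Geodesics

variable {V : Type*} {H : SimpleGraph V} {x : V → ℝ} {s t u v : V}

/-- The total vertex weight `x(V(p))` of a walk in a simple graph, with multiplicity and with
both ends included. -/
def vertexWeight (x : V → ℝ) (p : H.Walk u v) : ℝ := (p.support.map x).sum

theorem vertexWeight_cons (h : H.Adj u v) (p : H.Walk v t) :
    vertexWeight x (.cons h p) = x u + vertexWeight x p := by
  simp [vertexWeight]

theorem vertexWeight_nonneg (hx : ∀ w, 0 ≤ x w) (p : H.Walk u v) : 0 ≤ vertexWeight x p :=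
  List.sum_nonneg (by simpa using fun w _ => hx w)

theorem vertexWeight_reverse (p : H.Walk u v) : vertexWeight x p.reverse = vertexWeight x p := by
  simp [vertexWeight, List.sum_reverse]

theorem vertexWeight_bypass_le [DecidableEq V] (hx : ∀ w, 0 ≤ x w) (p : H.Walk u v) :
    vertexWeight x p.bypass ≤ vertexWeight x p :=
  (p.support_bypass_sublist_support.map x).sum_le_sum (by simpa using fun w _ => hx w)

theorem sum_range_getVert (p : H.Walk u v) :
    ∑ i ∈ Finset.range (p.length + 1), x (p.getVert i) = vertexWeight x p := by
  induction p with
  | nil => simp [vertexWeight]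
  | cons h p ih =>
    rw [vertexWeight_cons, ← ih, SimpleGraph.Walk.length_cons, Finset.sum_range_succ', add_comm]
    simp

/-- The vertex weight of a walk, with ties broken by length. -/
def lexWeight (x : V → ℝ) (p : H.Walk u v) : ℝ ×ₗ ℕ := toLex (vertexWeight x p, p.length)

theorem lexWeight_lt_cons (hx : ∀ w, 0 ≤ x w) (h : H.Adj u v) (p : H.Walk v t) :
    lexWeight x p < lexWeight x (.cons h p) := by
  rw [lexWeight, lexWeight, Prod.Lex.toLex_lt_toLex', vertexWeight_cons]
  exact ⟨le_add_of_nonneg_left (hx u), fun _ => Nat.lt_succ_self _⟩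

theorem lexWeight_bypass_le [DecidableEq V] (hx : ∀ w, 0 ≤ x w) (p : H.Walk u v) :
    lexWeight x p.bypass ≤ lexWeight x p :=
  Prod.Lex.toLex_mono ⟨vertexWeight_bypass_le hx p, p.length_bypass_le_length⟩

/-- A geodesic for the vertex weights `x`: a path of least weight and, among those, of least
length.  The tie-break makes the weight strictly decrease along a geodesic even where `x`
vanishes. -/
def IsGeodesic (x : V → ℝ) (p : H.Walk u v) : Prop :=
  p.IsPath ∧ ∀ q : H.Walk u v, lexWeight x p ≤ lexWeight x q

theorem exists_isGeodesic [Finite V] (hx : ∀ w, 0 ≤ x w) (h : H.Reachable u v) :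
    ∃ p : H.Walk u v, IsGeodesic x p := by
  classical
  have := Fintype.ofFinite V
  obtain ⟨p⟩ := h
  have : Nonempty (H.Path u v) := ⟨p.toPath⟩
  obtain ⟨p, hp⟩ := Finite.exists_min fun p : H.Path u v => lexWeight x p.1
  exact ⟨p, p.2, fun q => (hp q.toPath).trans (lexWeight_bypass_le hx q)⟩

theorem IsGeodesic.lexWeight_lt (hx : ∀ w, 0 ≤ x w) {p : H.Walk u t} {q : H.Walk v t}
    (hp : IsGeodesic x p) (hq : IsGeodesic x q) (huv : s(u, v) ∈ p.edges) :
    lexWeight x q < lexWeight x p := by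
  have hv : v = p.snd := hp.1.eq_snd_of_mem_edges huv
  cases p with
  | nil => simp at huv
  | cons h p =>
    obtain rfl : v = _ := by simpa using hv
    exact (hq.2 p).trans_lt (lexWeight_lt_cons hx h p)

/-- The least vertex weight of a walk from `v` to `s`, or `0` if there is none. -/
noncomputable def weightedDist (H : SimpleGraph V) (x : V → ℝ) (s v : V) : ℝ :=
  ⨅ p : H.Walk v s, vertexWeight x p

theorem weightedDist_le (hx : ∀ w, 0 ≤ x w) (p : H.Walk v s) :
    weightedDist H x s v ≤ vertexWeight x p :=
  ciInf_le ⟨0, Set.forall_mem_range.2 (vertexWeight_nonneg hx)⟩ p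

theorem weightedDist_nonneg (hx : ∀ w, 0 ≤ x w) : 0 ≤ weightedDist H x s v :=
  Real.iInf_nonneg (vertexWeight_nonneg hx)

theorem weightedDist_self (hx : ∀ w, 0 ≤ x w) (hs : x s = 0) : weightedDist H x s s = 0 :=
  le_antisymm ((weightedDist_le hx .nil).trans_eq (by simp [vertexWeight, hs]))
    (weightedDist_nonneg hx)

theorem IsGeodesic.vertexWeight_eq (hx : ∀ w, 0 ≤ x w) {p : H.Walk v s} (hp : IsGeodesic x p) :
    vertexWeight x p = weightedDist H x s v :=
  have : Nonempty (H.Walk v s) := ⟨p⟩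
  le_antisymm (le_ciInf fun q => Prod.Lex.monotone_fst _ _ (hp.2 q)) (weightedDist_le hx p)

theorem weightedDist_le_add [Finite V] (hx : ∀ w, 0 ≤ x w) (h : H.Adj u v) :
    weightedDist H x s v ≤ weightedDist H x s u + x v := by
  by_cases hu : H.Reachable u s
  · obtain ⟨p, hp⟩ := exists_isGeodesic hx hu
    rw [← hp.vertexWeight_eq hx, add_comm, ← vertexWeight_cons h.symm]
    exact weightedDist_le hx _
  · have : IsEmpty (H.Walk v s) := ⟨fun p => hu ⟨.cons h p⟩⟩
    rw [weightedDist, Real.iInf_of_isEmpty]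
    exact add_nonneg (weightedDist_nonneg hx) (hx v)

theorem mk_getVert_mem_edges (p : H.Walk u v) {i : ℕ} (hi : i < p.length) :
    s(p.getVert i, p.getVert (i + 1)) ∈ p.edges := by
  rw [← p.getElem_edges (by simpa using hi)]
  exact List.getElem_mem _

theorem injOn_mk_getVert {p : H.Walk u v} (hp : p.IsPath) :
    Set.InjOn (fun i => s(p.getVert i, p.getVert (i + 1))) {i | i < p.length} := by
  intro i hi j hj hij
  have hi' : i < p.edges.length := by simpa using hi
  have hj' : j < p.edges.length := by simpa using hj
  rw [← hp.isTrail.edges_nodup.getElem_inj_iff (hi := hi') (hj := hj'),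
    p.getElem_edges, p.getElem_edges]
  exact hij

end Geodesics

variable {V E : Type} {G : Multigraph V E} {s t u v : V}

section Join

/-- The simple graph underlying a multigraph: loops are dropped and parallel edges merged. -/
def adjGraph (G : Multigraph V E) : SimpleGraph V := SimpleGraph.fromEdgeSet (Set.range G.ends)

theorem adjGraph_reachable_of_ends {e : E} (he : G.ends e = s(u, v)) :
    G.adjGraph.Reachable u v := by
  by_cases huv : u = v
  · exact huv ▸ .rfl
  · exact SimpleGraph.Adj.reachable ((SimpleGraph.fromEdgeSet_adj _).2 ⟨⟨e, he⟩, huv⟩)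

theorem Walk.adjGraph_reachable_start (W : G.Walk) (i : Fin (W.len + 1)) :
    G.adjGraph.Reachable (W.verts i) W.start := by
  induction i using Fin.induction with
  | zero => exact .rfl
  | succ i ih => exact (adjGraph_reachable_of_ends (W.valid i)).symm.trans ih

theorem Walk.isSCycle_of_injOn {W : G.Walk} (hstart : W.start = s) (hfinish : W.finish = s)
    (hinner : ∀ i, i ≠ 0 → i ≠ Fin.last W.len → W.verts i ≠ s) (k : ℕ)
    (hle : Set.InjOn W.edges {i | (i : ℕ) ≤ k}) (hge : Set.InjOn W.edges {i | k ≤ (i : ℕ)}) :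
    W.IsSCycle s := by
  refine ⟨hstart, hfinish, hinner, fun i j hij heq => ?_, fun e => ?_⟩
  · have : i = j := by
      rcases lt_or_ge (i : ℕ) k with hi | hi
      · exact hle hi.le (show (j : ℕ) ≤ k by omega) heq
      · exact hge hi (show k ≤ (j : ℕ) by omega) heq
    omega
  · rw [← Nat.card_eq_two_iff.2 ⟨false, true, by simp, by ext b; cases b <;> simp⟩]
    refine Nat.card_le_card_of_injective
      (fun i : {i : Fin W.len // W.edges i = e} => decide ((i : ℕ) ≤ k)) ?_
    rintro ⟨i, hi⟩ ⟨j, hj⟩ hij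
    have hij : (i : ℕ) ≤ k ↔ (j : ℕ) ≤ k := by simpa using hij
    refine Subtype.ext ?_
    rcases le_or_gt (i : ℕ) k with hik | hik
    · exact hle hik (hij.1 hik) (hi.trans hj.symm)
    · exact hge hik.le (le_of_not_ge (mt hij.2 hik.not_ge)) (hi.trans hj.symm)

variable {p : G.adjGraph.Walk s u} {q : G.adjGraph.Walk v t}

/-- The vertex sequence of `p` followed by that of `q`. -/
def joinVerts (p : G.adjGraph.Walk s u) (q : G.adjGraph.Walk v t) (i : ℕ) : V :=
  if i ≤ p.length then p.getVert i else q.getVert (i - (p.length + 1))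

theorem joinVerts_of_le {i : ℕ} (hi : i ≤ p.length) : joinVerts p q i = p.getVert i := if_pos hi

theorem joinVerts_length_add (i : ℕ) : joinVerts p q (p.length + 1 + i) = q.getVert i := by
  rw [joinVerts, if_neg (by omega), Nat.add_sub_cancel_left]

/-- A choice of an edge of the multigraph for every edge of its underlying simple graph. -/
noncomputable def liftEdge (G : Multigraph V E) [Nonempty E] : Sym2 V → E := Function.invFun G.ends

variable [Nonempty E]

theorem ends_liftEdge {z : Sym2 V} (hz : z ∈ G.adjGraph.edgeSet) : G.ends (G.liftEdge z) = z := by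
  rw [adjGraph, SimpleGraph.edgeSet_fromEdgeSet] at hz
  exact Function.invFun_eq hz.1

theorem liftEdge_injOn : Set.InjOn G.liftEdge G.adjGraph.edgeSet :=
  Set.LeftInvOn.injOn fun _ => ends_liftEdge

theorem injOn_liftEdge_getVert (hp : p.IsPath) :
    Set.InjOn (fun i => G.liftEdge s(p.getVert i, p.getVert (i + 1))) {i | i < p.length} :=
  liftEdge_injOn.comp (injOn_mk_getVert hp) fun _ hi => p.adj_getVert_succ hi

/-- The edge sequence lifting `p`, then `e`, then `q` to the multigraph. -/
noncomputable def joinEdges (p : G.adjGraph.Walk s u) (e : E) (q : G.adjGraph.Walk v t) (i : ℕ) :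
    E :=
  if i = p.length then e else G.liftEdge s(joinVerts p q i, joinVerts p q (i + 1))

variable {e : E}

theorem joinEdges_length : joinEdges p e q p.length = e := if_pos rfl

theorem joinEdges_of_lt {i : ℕ} (hi : i < p.length) :
    joinEdges p e q i = G.liftEdge s(p.getVert i, p.getVert (i + 1)) := by
  rw [joinEdges, if_neg hi.ne, joinVerts_of_le hi.le, joinVerts_of_le hi]

theorem joinEdges_length_add (i : ℕ) :
    joinEdges p e q (p.length + 1 + i) = G.liftEdge s(q.getVert i, q.getVert (i + 1)) := by
  rw [joinEdges, if_neg (by omega), add_assoc _ i, joinVerts_length_add, joinVerts_length_add]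

theorem joinEdges_valid (he : G.ends e = s(u, v)) {i : ℕ} (hi : i < p.length + 1 + q.length) :
    G.ends (joinEdges p e q i) = s(joinVerts p q i, joinVerts p q (i + 1)) := by
  rcases lt_trichotomy i p.length with h | rfl | h
  · rw [joinEdges_of_lt h, joinVerts_of_le h.le, joinVerts_of_le h]
    exact ends_liftEdge (p.adj_getVert_succ h)
  · rw [joinEdges_length, he, joinVerts_of_le le_rfl, joinVerts_length_add (i := 0)]
    simp
  · obtain ⟨k, rfl⟩ := Nat.exists_eq_add_of_le h
    rw [Nat.succ_eq_add_one, joinEdges_length_add, add_assoc _ k, joinVerts_length_add,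
      joinVerts_length_add]
    exact ends_liftEdge (q.adj_getVert_succ (by omega))

theorem joinEdges_injOn_le (hp : p.IsPath) (hpe : ∀ z ∈ p.edges, G.liftEdge z ≠ e) :
    Set.InjOn (joinEdges p e q) {i | i ≤ p.length} := by
  have hlift : Set.EqOn (fun i => G.liftEdge s(p.getVert i, p.getVert (i + 1))) (joinEdges p e q)
      {i | i < p.length} := fun i hi => (joinEdges_of_lt hi).symm
  have hset : {i | i ≤ p.length} = insert p.length {i | i < p.length} := by
    ext i; simp [le_iff_eq_or_lt]
  rw [hset, Set.injOn_insert (by simp), joinEdges_length]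
  refine ⟨(injOn_liftEdge_getVert hp).congr hlift, ?_⟩
  rintro ⟨i, hi, hie⟩
  exact hpe _ (mk_getVert_mem_edges p hi) ((joinEdges_of_lt hi).symm.trans hie)

theorem joinEdges_injOn_ge (hq : q.IsPath) (hqe : ∀ z ∈ q.edges, G.liftEdge z ≠ e) :
    Set.InjOn (joinEdges p e q) {i | p.length ≤ i ∧ i < p.length + 1 + q.length} := by
  have hne : ∀ k, k < q.length → joinEdges p e q (p.length + 1 + k) ≠ e := fun k hk => by
    rw [joinEdges_length_add]
    exact hqe _ (mk_getVert_mem_edges q hk)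
  rintro i ⟨hi, hi'⟩ j ⟨hj, hj'⟩ hij
  obtain rfl | ⟨k, rfl⟩ := hi.eq_or_lt.imp_right Nat.exists_eq_add_of_le <;>
    obtain rfl | ⟨l, rfl⟩ := hj.eq_or_lt.imp_right Nat.exists_eq_add_of_le
  · rfl
  · exact absurd (hij.symm.trans joinEdges_length) (hne l (by omega))
  · exact absurd (hij.trans joinEdges_length) (hne k (by omega))
  · simp only [Nat.succ_eq_add_one, joinEdges_length_add] at hij
    rw [injOn_liftEdge_getVert hq (show k < q.length by omega) (show l < q.length by omega) hij]

/-- The walk in the multigraph that follows `p`, then the edge `e`, then `q`. -/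
noncomputable def join (p : G.adjGraph.Walk s u) (q : G.adjGraph.Walk v t)
    (he : G.ends e = s(u, v)) : G.Walk where
  len := p.length + 1 + q.length
  len_pos := by omega
  verts i := joinVerts p q i
  edges i := joinEdges p e q i
  valid i := joinEdges_valid he i.isLt

theorem sum_join (x : V → ℝ) (he : G.ends e = s(u, v)) :
    ∑ i, x ((join p q he).verts i) = vertexWeight x p + vertexWeight x q := by
  rw [← sum_range_getVert, ← sum_range_getVert]
  calc ∑ i : Fin (p.length + 1 + q.length + 1), x (joinVerts p q i)
      = ∑ i ∈ Finset.range (p.length + 1 + (q.length + 1)), x (joinVerts p q i) :=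
        Fin.sum_univ_eq_sum_range (fun i => x (joinVerts p q i)) _
    _ = _ := by
        rw [Finset.sum_range_add]
        simp only [joinVerts_length_add]
        congr 1
        refine Finset.sum_congr rfl fun i hi => ?_
        rw [joinVerts_of_le (Nat.lt_succ_iff.1 (Finset.mem_range.1 hi))]

theorem join_isSCycle {q : G.adjGraph.Walk v s} (hp : p.IsPath) (hq : q.IsPath)
    (he : G.ends e = s(u, v)) (hpe : ∀ z ∈ p.edges, G.liftEdge z ≠ e)
    (hqe : ∀ z ∈ q.edges, G.liftEdge z ≠ e) : (join p q he).IsSCycle s := by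
  refine Walk.isSCycle_of_injOn ?_ ?_ (fun i h₀ hlast => ?_) p.length ?_ ?_
  · exact (joinVerts_of_le (q := q) (Nat.zero_le _)).trans p.getVert_zero
  · exact (joinVerts_length_add _).trans q.getVert_length
  · have hi : (i : ℕ) ≠ 0 := fun h => h₀ (Fin.ext h)
    have hi' : (i : ℕ) ≠ p.length + 1 + q.length := fun h => hlast (Fin.ext h)
    have hlt : (i : ℕ) < p.length + 1 + q.length + 1 := i.isLt
    change joinVerts p q i ≠ s
    rcases le_or_gt (i : ℕ) p.length with h | h
    · rwa [joinVerts_of_le h, Ne, hp.getVert_eq_start_iff h]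
    · obtain ⟨k, hk⟩ := Nat.exists_eq_add_of_le h
      rw [hk, joinVerts_length_add, Ne, hq.getVert_eq_end_iff (by omega)]
      omega
  · exact fun i hi j hj h => Fin.ext (joinEdges_injOn_le hp hpe hi hj h)
  · exact fun i hi j hj h => Fin.ext (joinEdges_injOn_ge hq hqe ⟨hi, i.isLt⟩ ⟨hj, j.isLt⟩ h)

end Join

section HeavyEdge

variable {x : V → ℝ}

theorem one_le_vertexWeight_add [Nonempty E] (hx : G.IsSCycleCover s x) {e : E}
    (he : G.ends e = s(u, v)) {p : G.adjGraph.Walk u s} {q : G.adjGraph.Walk v s} (hp : p.IsPath)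
    (hq : q.IsPath) (hpe : ∀ z ∈ p.edges, G.liftEdge z ≠ e)
    (hqe : ∀ z ∈ q.edges, G.liftEdge z ≠ e) : 1 ≤ vertexWeight x p + vertexWeight x q := by
  rw [← vertexWeight_reverse p, ← sum_join x he]
  exact hx.2.2 _ (join_isSCycle hp.reverse hq he (by simpa using hpe) hqe)

theorem IsGeodesic.liftEdge_mk_snd [Nonempty E] (hx : G.IsSCycleCover s x) {e : E}
    (he : G.ends e = s(u, v)) {p : G.adjGraph.Walk u s} {q : G.adjGraph.Walk v s}
    (hp : IsGeodesic x p) (hq : IsGeodesic x q) (hpq : vertexWeight x p + vertexWeight x q < 1)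
    (hle : lexWeight x q ≤ lexWeight x p) : ¬p.Nil ∧ G.liftEdge s(u, p.snd) = e := by
  have hlift : ∀ z ∈ G.adjGraph.edgeSet, G.liftEdge z = e → z = s(u, v) := fun z hz hze => by
    rw [← he, ← hze, ends_liftEdge hz]
  have hedge : (∃ z ∈ p.edges, G.liftEdge z = e) ∨ ∃ z ∈ q.edges, G.liftEdge z = e := by
    contrapose! hpq
    exact one_le_vertexWeight_add hx he hp.1 hq.1 hpq.1 hpq.2
  rcases hedge with ⟨z, hz, hze⟩ | ⟨z, hz, hze⟩ <;>
    obtain rfl := hlift z (SimpleGraph.Walk.edges_subset_edgeSet _ hz) hze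
  · refine ⟨fun hnil => ?_, hp.1.eq_snd_of_mem_edges hz ▸ hze⟩
    rw [SimpleGraph.Walk.edges_eq_nil.2 hnil] at hz
    exact List.not_mem_nil hz
  · exact absurd (hq.lexWeight_lt hx.1 hp (Sym2.eq_swap ▸ hz)) hle.not_gt

theorem exists_one_le_weightedDist_add [Finite V] (hx : G.IsSCycleCover s x) {W : G.Walk}
    (hW : W.IsSCycle s) :
    ∃ k : Fin W.len, 1 ≤ weightedDist G.adjGraph x s (W.verts k.castSucc) +
      weightedDist G.adjGraph x s (W.verts k.succ) := by
  have : Nonempty E := ⟨W.edges ⟨0, W.len_pos⟩⟩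
  by_contra! hlight
  have hreach : ∀ i, ∃ p : G.adjGraph.Walk (W.verts i) s, IsGeodesic x p := fun i =>
    exists_isGeodesic hx.1 (hW.1 ▸ W.adjGraph_reachable_start i)
  choose P hP using hreach
  simp only [← (hP _).vertexWeight_eq hx.1] at hlight
  obtain ⟨i, hmax⟩ := Finite.exists_max fun i => lexWeight x (P i)
  have hprev : ∀ k : Fin W.len, k.succ = i →
      ¬(P i).Nil ∧ G.liftEdge s(W.verts i, (P i).snd) = W.edges k := by
    rintro k rfl
    exact (hP k.succ).liftEdge_mk_snd hx ((W.valid k).trans Sym2.eq_swap) (hP k.castSucc)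
      ((add_comm _ _).trans_lt (hlight k)) (hmax _)
  have hnext : ∀ k : Fin W.len, k.castSucc = i →
      ¬(P i).Nil ∧ G.liftEdge s(W.verts i, (P i).snd) = W.edges k := by
    rintro k rfl
    exact (hP k.castSucc).liftEdge_mk_snd hx (W.valid k) (hP k.succ) (hlight k) (hmax _)
  have hi : W.verts i ≠ s := fun his => by
    have hnil : (P i).Nil := (hP i).1.nil_iff_eq.2 his
    rcases i.eq_zero_or_eq_succ with hi | ⟨k, hk⟩
    · exact (hnext ⟨0, W.len_pos⟩ hi.symm).1 hnil
    · exact (hprev k hk.symm).1 hnil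
  obtain ⟨k, hk⟩ := Fin.exists_succ_eq.2 (show i ≠ 0 from fun h => hi (h ▸ hW.1))
  obtain ⟨l, hl⟩ := Fin.exists_castSucc_eq.2 (show i ≠ Fin.last W.len from fun h => hi (h ▸ hW.2.1))
  exact hW.2.2.2.1 k l (by simpa using congrArg Fin.val (hk.trans hl.symm))
    ((hprev k hk).2.symm.trans (hnext l hl).2)

end HeavyEdge

section Rounding

variable {θ : ℝ}

/-- The threshold rounding of `x` with respect to the distance `d`, averaged over the thresholds
`θ` and `1 - θ`: a vertex is selected by a threshold lying in the interval of length `x v` that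
ends at `d v`. -/
noncomputable def thresholdRound (x d : V → ℝ) (θ : ℝ) (v : V) : ℝ :=
  ((Set.Ioc (d v - x v) (d v)).indicator 1 θ + (Set.Ioc (d v - x v) (d v)).indicator 1 (1 - θ)) / 2

variable {x d : V → ℝ}

theorem thresholdRound_one_sub : thresholdRound x d (1 - θ) = thresholdRound x d θ := by
  ext v
  rw [thresholdRound, thresholdRound, sub_sub_cancel, add_comm]

theorem halfIntegral_thresholdRound : HalfIntegral (thresholdRound x d θ) := fun v => by
  rcases Set.indicator_eq_zero_or_self (Set.Ioc (d v - x v) (d v)) (1 : ℝ → ℝ) θ with h | h <;>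
    rcases Set.indicator_eq_zero_or_self (Set.Ioc (d v - x v) (d v)) (1 : ℝ → ℝ) (1 - θ)
      with h' | h' <;>
    norm_num [thresholdRound, h, h']

theorem HalfIntegral.nonneg (hx : HalfIntegral x) (v : V) : 0 ≤ x v := by
  rcases hx v with h | h | h <;> norm_num [h]

theorem thresholdRound_eq_zero (hd : d v = 0) (h₀ : 0 < θ) (h₁ : θ < 1) :
    thresholdRound x d θ v = 0 := by
  rw [thresholdRound, Set.indicator_of_notMem fun h => (h.2.trans_eq hd).not_gt h₀,
    Set.indicator_of_notMem fun h => (h.2.trans_eq hd).not_gt (sub_pos.2 h₁)]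
  norm_num

theorem one_half_le_thresholdRound (h : θ ∈ Set.Ioc (d v - x v) (d v)) :
    1 / 2 ≤ thresholdRound x d θ v := by
  have : 0 ≤ (Set.Ioc (d v - x v) (d v)).indicator (1 : ℝ → ℝ) (1 - θ) :=
    Set.indicator_nonneg (fun _ _ => zero_le_one) _
  rw [thresholdRound, Set.indicator_of_mem h, Pi.one_apply]
  linarith

theorem thresholdRound_eq_one (h : θ ∈ Set.Ioc (d v - x v) (d v))
    (h' : 1 - θ ∈ Set.Ioc (d v - x v) (d v)) : thresholdRound x d θ v = 1 := by
  rw [thresholdRound, Set.indicator_of_mem h, Set.indicator_of_mem h']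
  norm_num

theorem one_le_sum_thresholdRound_of_ne [Fintype V] (huv : u ≠ v)
    (hu : θ ∈ Set.Ioc (d u - x u) (d u)) (hv : θ ∈ Set.Ioc (d v - x v) (d v)) :
    1 ≤ ∑ w, thresholdRound x d θ w :=
  calc 1 = 1 / 2 + 1 / 2 := by norm_num
    _ ≤ thresholdRound x d θ u + thresholdRound x d θ v :=
      add_le_add (one_half_le_thresholdRound hu) (one_half_le_thresholdRound hv)
    _ ≤ ∑ w, thresholdRound x d θ w :=
      Finset.add_le_sum (fun w _ => halfIntegral_thresholdRound.nonneg w) (Finset.mem_univ u)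
        (Finset.mem_univ v) huv

section Sequence

variable {n : ℕ} {x d : Fin (n + 1) → ℝ} {i : Fin (n + 1)}

theorem exists_crossing_le (hup : ∀ k : Fin n, d k.succ ≤ d k.castSucc + x k.succ)
    (h₀ : d 0 < θ) (hi : θ ≤ d i) : ∃ j ≤ i, θ ∈ Set.Ioc (d j - x j) (d j) := by
  induction i using Fin.induction with
  | zero => exact absurd hi h₀.not_ge
  | succ k ih =>
    rcases le_or_gt θ (d k.castSucc) with h | h
    · obtain ⟨j, hj, hθ⟩ := ih h
      exact ⟨j, hj.trans k.castSucc_lt_succ.le, hθ⟩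
    · exact ⟨k.succ, le_rfl, by linarith [hup k], hi⟩

theorem exists_crossing_ge (hdown : ∀ k : Fin n, d k.castSucc ≤ d k.succ + x k.castSucc)
    (hlast : d (Fin.last n) < θ) (hi : θ ≤ d i) : ∃ j ≥ i, θ ∈ Set.Ioc (d j - x j) (d j) := by
  obtain ⟨j, hj, hθ⟩ := exists_crossing_le (x := x ∘ Fin.rev) (d := d ∘ Fin.rev) (i := i.rev)
    (fun k => by simpa [Fin.rev_castSucc, Fin.rev_succ] using hdown k.rev) (by simpa using hlast)
    (by simpa using hi)
  exact ⟨j.rev, Fin.le_rev_iff.2 hj, hθ⟩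

theorem one_le_sum_thresholdRound_of_le_half
    (hup : ∀ k : Fin n, d k.succ ≤ d k.castSucc + x k.succ)
    (hdown : ∀ k : Fin n, d k.castSucc ≤ d k.succ + x k.castSucc)
    (h₀ : d 0 < θ) (hlast : d (Fin.last n) < θ) (hθ : θ ≤ 1 / 2)
    (hheavy : ∃ k : Fin n, 1 ≤ d k.castSucc + d k.succ) :
    1 ≤ ∑ i, thresholdRound x d θ i := by
  have hfar : ∀ i, 1 - θ ≤ d i → 1 ≤ ∑ i, thresholdRound x d θ i := fun i hi => by
    obtain ⟨j, hji, hj⟩ := exists_crossing_le hup h₀ (show θ ≤ d i by linarith)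
    obtain ⟨l, hil, hl⟩ := exists_crossing_ge hdown hlast (show θ ≤ d i by linarith)
    rcases (hji.trans hil).eq_or_lt with rfl | hjl
    · obtain rfl := hji.antisymm hil
      rw [← thresholdRound_eq_one hj ⟨by linarith [hj.1], hi⟩]
      exact Finset.single_le_sum (fun w _ => halfIntegral_thresholdRound.nonneg w)
        (Finset.mem_univ j)
    · exact one_le_sum_thresholdRound_of_ne hjl.ne hj hl
  obtain ⟨k, hk⟩ := hheavy
  rcases lt_or_ge (d k.castSucc) θ with hleft | hleft
  · exact hfar k.succ (by linarith)
  rcases lt_or_ge (d k.succ) θ with hright | hright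
  · exact hfar k.castSucc (by linarith)
  obtain ⟨j, hjk, hj⟩ := exists_crossing_le hup h₀ hleft
  obtain ⟨l, hkl, hl⟩ := exists_crossing_ge hdown hlast hright
  exact one_le_sum_thresholdRound_of_ne (hjk.trans_lt (k.castSucc_lt_succ.trans_le hkl)).ne hj hl

theorem one_le_sum_thresholdRound
    (hup : ∀ k : Fin n, d k.succ ≤ d k.castSucc + x k.succ)
    (hdown : ∀ k : Fin n, d k.castSucc ≤ d k.succ + x k.castSucc)
    (h₀ : d 0 ≤ 0) (hlast : d (Fin.last n) ≤ 0) (hθ₀ : 0 < θ) (hθ₁ : θ < 1)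
    (hheavy : ∃ k : Fin n, 1 ≤ d k.castSucc + d k.succ) :
    1 ≤ ∑ i, thresholdRound x d θ i := by
  rcases le_or_gt θ (1 / 2) with hθ | hθ
  · exact one_le_sum_thresholdRound_of_le_half hup hdown (h₀.trans_lt hθ₀) (hlast.trans_lt hθ₀) hθ
      hheavy
  · rw [← thresholdRound_one_sub]
    exact one_le_sum_thresholdRound_of_le_half hup hdown (h₀.trans_lt (sub_pos.2 hθ₁))
      (hlast.trans_lt (sub_pos.2 hθ₁)) (by linarith) hheavy

end Sequence

section Average

open MeasureTheory

theorem integrable_indicator_Ioc (a b : ℝ) : Integrable ((Set.Ioc a b).indicator (1 : ℝ → ℝ)) :=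
  (integrable_indicator_iff measurableSet_Ioc).2 (integrableOn_const (by simp))

theorem integrable_thresholdRound (v : V) : Integrable fun θ => thresholdRound x d θ v :=
  ((integrable_indicator_Ioc _ _).add ((integrable_indicator_Ioc _ _).comp_sub_left 1)).div_const 2

theorem integral_thresholdRound (hx : 0 ≤ x v) : ∫ θ, thresholdRound x d θ v = x v := by
  have hind : ∫ θ, (Set.Ioc (d v - x v) (d v)).indicator (1 : ℝ → ℝ) θ = x v := by
    rw [integral_indicator_one measurableSet_Ioc, Real.volume_real_Ioc_of_le (by linarith),
      sub_sub_cancel]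
  simp only [thresholdRound]
  rw [integral_div, integral_add (integrable_indicator_Ioc _ _)
    ((integrable_indicator_Ioc _ _).comp_sub_left 1),
    integral_sub_left_eq_self _ volume, hind, add_self_div_two]

theorem exists_sum_thresholdRound_le [Fintype V] {c : V → ℝ} (hc : ∀ v, 0 ≤ c v)
    (hx : ∀ v, 0 ≤ x v) :
    ∃ θ ∈ Set.Ioo (0 : ℝ) 1, ∑ v, c v * thresholdRound x d θ v ≤ ∑ v, c v * x v := by
  have hint (v : V) : IntegrableOn (fun θ => c v * thresholdRound x d θ v) (Set.Ioo 0 1) :=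
    (integrable_thresholdRound v).integrableOn.const_mul (c v)
  obtain ⟨θ, hθ, hle⟩ := exists_le_setAverage (by simp) (by simp)
    (integrable_finsetSum Finset.univ fun v _ => hint v)
  refine ⟨θ, hθ, hle.trans ?_⟩
  calc ⨍ θ in Set.Ioo 0 1, ∑ v, c v * thresholdRound x d θ v
      = ∑ v, c v * ∫ θ in Set.Ioo 0 1, thresholdRound x d θ v := by
        rw [setAverage_eq, integral_finsetSum _ fun v _ => hint v]
        simp [integral_const_mul]
    _ ≤ ∑ v, c v * x v := by
        gcongr with v
        · exact hc v
        · rw [← integral_thresholdRound (d := d) (hx v)]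
          exact setIntegral_le_integral (integrable_thresholdRound v)
            (ae_of_all _ fun θ => halfIntegral_thresholdRound.nonneg v)

end Average

end Rounding

section Cover

variable {x : V → ℝ}

theorem weightedDist_le_add_of_ends [Finite V] (hx : ∀ w, 0 ≤ x w) {e : E}
    (he : G.ends e = s(u, v)) :
    weightedDist G.adjGraph x s v ≤ weightedDist G.adjGraph x s u + x v := by
  by_cases huv : u = v
  · exact huv ▸ le_add_of_nonneg_right (hx u)
  · exact weightedDist_le_add hx ((SimpleGraph.fromEdgeSet_adj _).2 ⟨⟨e, he⟩, huv⟩)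

theorem isSCycleCover_thresholdRound [Finite V] (hx : G.IsSCycleCover s x) {θ : ℝ}
    (hθ : θ ∈ Set.Ioo (0 : ℝ) 1) :
    G.IsSCycleCover s (thresholdRound x (weightedDist G.adjGraph x s) θ) := by
  have hds : weightedDist G.adjGraph x s s = 0 := weightedDist_self hx.1 hx.2.1
  refine ⟨halfIntegral_thresholdRound.nonneg, thresholdRound_eq_zero hds hθ.1 hθ.2,
    fun W hW => ?_⟩
  refine one_le_sum_thresholdRound (x := x ∘ W.verts)
    (d := weightedDist G.adjGraph x s ∘ W.verts)
    (fun k => weightedDist_le_add_of_ends hx.1 (W.valid k))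
    (fun k => weightedDist_le_add_of_ends hx.1 ((W.valid k).trans Sym2.eq_swap))
    ?_ ?_ hθ.1 hθ.2 (exists_one_le_weightedDist_add hx hW)
  · exact ((congrArg _ hW.1).trans hds).le
  · exact ((congrArg _ hW.2.1).trans hds).le

theorem IsSCycleCover.exists_halfIntegral_le [Fintype V] (hx : G.IsSCycleCover s x) {c : V → ℝ}
    (hc : ∀ v, 0 ≤ c v) :
    ∃ y, G.IsSCycleCover s y ∧ HalfIntegral y ∧ ∑ v, c v * y v ≤ ∑ v, c v * x v := by
  obtain ⟨θ, hθ, hle⟩ :=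
    exists_sum_thresholdRound_le (d := weightedDist G.adjGraph x s) hc hx.1
  exact ⟨_, isSCycleCover_thresholdRound hx hθ, halfIntegral_thresholdRound, hle⟩

theorem Walk.exists_verts_ne (W : G.Walk) (hs : ∀ e, G.ends e ≠ s(s, s)) :
    ∃ i, W.verts i ≠ s := by
  by_contra! hverts
  exact hs _ ((W.valid ⟨0, W.len_pos⟩).trans (by rw [hverts, hverts]))

theorem isSCycleCover_indicator_compl (hs : ∀ e, G.ends e ≠ s(s, s)) :
    G.IsSCycleCover s (({s}ᶜ : Set V).indicator 1) := by
  have hnonneg : ∀ v, 0 ≤ ({s}ᶜ : Set V).indicator (1 : V → ℝ) v :=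
    Set.indicator_nonneg fun _ _ => zero_le_one
  refine ⟨hnonneg, by simp, fun W _ => ?_⟩
  obtain ⟨i, hi⟩ := W.exists_verts_ne hs
  calc 1 = ({s}ᶜ : Set V).indicator (1 : V → ℝ) (W.verts i) := by simp [hi]
    _ ≤ _ := Finset.single_le_sum (fun i _ => hnonneg (W.verts i)) (Finset.mem_univ i)

theorem halfIntegral_indicator_one (A : Set V) : HalfIntegral (A.indicator 1) := fun v =>
  (Set.indicator_eq_zero_or_self A 1 v).imp_right .inr

theorem finite_halfIntegral [Finite V] : {x : V → ℝ | HalfIntegral x}.Finite :=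
  Set.Finite.subset (Set.Finite.pi' fun _ : V => Set.toFinite {0, 1 / 2, (1 : ℝ)}) fun _ hx => hx

end Cover

end Multigraph

open Multigraph in
theorem stmt3_exists_halfIntegral_minSCycleCover_general {V E : Type} [Fintype V]
    (G : Multigraph V E) (s : V) (hs : ∀ e, G.ends e ≠ s(s, s)) (c : V → ℝ) (hc : ∀ v, 0 ≤ c v) :
    ∃ x : V → ℝ, G.IsSCycleCover s x ∧ HalfIntegral x ∧
      ∀ x' : V → ℝ, G.IsSCycleCover s x' → ∑ v, c v * x v ≤ ∑ v, c v * x' v := by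
  obtain ⟨x, ⟨hx, hxhalf⟩, hmin⟩ :=
    Set.exists_min_image {x | G.IsSCycleCover s x ∧ HalfIntegral x} (fun x => ∑ v, c v * x v)
      (finite_halfIntegral.subset fun _ h => h.2)
      ⟨_, isSCycleCover_indicator_compl hs, halfIntegral_indicator_one _⟩
  refine ⟨x, hx, hxhalf, fun x' hx' => ?_⟩
  obtain ⟨y, hy, hyhalf, hyle⟩ := hx'.exists_halfIntegral_le hc
  exact (hmin y ⟨hy, hyhalf⟩).trans hyle

/-- there exists a half-integral minimum `s`-cycle cover. -/
theorem stmt3_exists_halfIntegral_minSCycleCover {V E : Type} [Fintype V] [Fintype E]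
    (G : Multigraph V E) (hloop : G.LoopFree) (s : V) :
    ∃ x : V → ℝ, G.IsSCycleCover s x ∧ Multigraph.HalfIntegral x ∧
      ∀ x' : V → ℝ, G.IsSCycleCover s x' → ∑ v, x v ≤ ∑ v, x' v := by
  simpa using stmt3_exists_halfIntegral_minSCycleCover_general G s
    (fun e he => hloop e (by simp [he])) 1 (fun _ => zero_le_one)
end

section
/- Let G=(V,E) be a multigraph without self-loops and let s ∈ V. If there exists a minimum feedback vertex set of G that does not contain s, then for every half-integral minimum s-cycle cover x of G there exists a minimum feedback vertex set S of G such that x⁻¹(1) ⊆ S and s ∉ S (persistency). -/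
/-!
An exchange argument. Let `T` be a feedback vertex set avoiding `s`, let `R` be the component of `s`
in the subgraph induced by the zeros of `x`, and let `D ⊆ R` be the part of it still connected to
`s` after deleting `T`. Trade `T ∩ R` for `x⁻¹(1)` together with the vertices outside `R` that have
a neighbour in `R \ D`; call the result `S`.

A cycle avoiding `S` would meet `R \ D`, and then all its vertices lie in `R`. Consider its vertex
`v` in `R \ D` farthest from `s`: both cycle neighbours of `v` are connected to `s` through zeros of
`x` other than `v`, which closes up an `s`-cycle of weight `x v = 0`.

For the size, give weight `1` to the vertices outside `D` with at least two edges to `D` and weight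
`1/2` to those with exactly one. This is again an `s`-cycle cover, so by minimality of `x` its size
is at least that of `x`, while vertex by vertex half of `1_S - 1_T` is at most `x` minus this cover;
hence `|S| ≤ |T|`.
-/

namespace Multigraph

variable {V E : Type} {G : Multigraph V E} {H : SimpleGraph V} {D T Y Z : Set V}
  {s u v w : V} {x : V → ℝ}

/-! ### Multigraph walks along simple-graph walks -/

theorem length_eq_of_map_ends_eq_edges {p : H.Walk u v} {es : List E}
    (hes : es.map G.ends = p.edges) : es.length = p.length := by
  simpa using congrArg List.length hes

/-- The walk of a multigraph that follows the vertices of a walk `p` in a simple graph and uses the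
edges listed in `es`, a choice of one edge of `G` for each step of `p`. -/
def Walk.ofSimpleWalk (p : H.Walk u v) (es : List E) (hes : es.map G.ends = p.edges)
    (hp : 0 < p.length) : G.Walk where
  len := p.length
  len_pos := hp
  verts i := p.getVert i
  edges i := es[i]'(i.2.trans_eq (length_eq_of_map_ends_eq_edges hes).symm)
  valid i := by
    have hi : (i : ℕ) < (es.map G.ends).length := by simp [hes]
    have h : (es.map G.ends)[(i : ℕ)] = p.edges[(i : ℕ)]'(by simp) := by simp only [hes]
    simpa [SimpleGraph.Walk.getElem_edges] using h

theorem Walk.start_ofSimpleWalk (p : H.Walk u v) (es : List E) (hes : es.map G.ends = p.edges)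
    (hp : 0 < p.length) : (ofSimpleWalk p es hes hp).start = u :=
  p.getVert_zero

theorem Walk.finish_ofSimpleWalk (p : H.Walk u v) (es : List E) (hes : es.map G.ends = p.edges)
    (hp : 0 < p.length) : (ofSimpleWalk p es hes hp).finish = v :=
  p.getVert_length

theorem Walk.sum_verts_ofSimpleWalk (p : H.Walk u v) (es : List E)
    (hes : es.map G.ends = p.edges) (hp : 0 < p.length) (x : V → ℝ) :
    ∑ i, x ((ofSimpleWalk p es hes hp).verts i) = (p.support.map x).sum := by
  rw [← Fin.sum_univ_fun_getElem]
  refine Fintype.sum_equiv (finCongr p.length_support.symm) _ _ fun i => ?_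
  exact congrArg x (p.getVert_eq_support_getElem (Nat.lt_succ_iff.mp i.2))

theorem Walk.isCycle_ofSimpleWalk {p : H.Walk v v} {es : List E}
    (hes : es.map G.ends = p.edges) (hp : 0 < p.length) (hnodup : es.Nodup)
    (hsupport : p.support.dropLast.Nodup) : (ofSimpleWalk p es hes hp).IsCycle := by
  refine ⟨?_, fun i j hij => ?_, fun i j hij => ?_⟩
  · rw [start_ofSimpleWalk, finish_ofSimpleWalk]
  · exact Fin.ext ((hnodup.getElem_inj_iff).1 hij)
  · have hi : (i : ℕ) < p.length := i.2
    have hj : (j : ℕ) < p.length := j.2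
    refine Fin.ext ((hsupport.getElem_inj_iff (hi := by simpa) (hj := by simpa)).1 ?_)
    have hij : p.getVert i = p.getVert j := hij
    simpa only [List.getElem_dropLast, p.support_getElem_eq_getVert] using hij

theorem nodup_of_map_ends_eq_edges {p : H.Walk u v} (hp : p.IsPath) {es : List E}
    (hes : es.map G.ends = p.edges) : es.Nodup :=
  List.Nodup.of_map G.ends (hes ▸ hp.isTrail.edges_nodup)

theorem card_getElem_eq_count {α : Type*} [DecidableEq α] {l : List α} {n : ℕ}
    (hl : l.length = n) (a : α) : Nat.card {i : Fin n // l[i] = a} = l.count a := by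
  subst hl
  rw [Nat.card_eq_fintype_card, Fintype.card_subtype]
  exact Fin.card_filter_univ_eq_vector_get_eq_count a ⟨l, rfl⟩

theorem map_ends_append_reverse {p : H.Walk u v} {q : H.Walk w v} {es fs : List E}
    (hes : es.map G.ends = p.edges) (hfs : fs.map G.ends = q.edges) :
    (es ++ fs.reverse).map G.ends = (p.append q.reverse).edges := by
  simp [hes, hfs]

theorem Walk.isSCycle_ofSimpleWalk_append_reverse {p q : H.Walk s v} (hp : p.IsPath)
    (hq : q.IsPath) {es fs : List E} (hes : es.map G.ends = p.edges)
    (hfs : fs.map G.ends = q.edges) (hlast : es.getLast? ≠ fs.getLast?)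
    (hlen : 0 < (p.append q.reverse).length) :
    (ofSimpleWalk (p.append q.reverse) (es ++ fs.reverse)
      (map_ends_append_reverse hes hfs) hlen).IsSCycle s := by
  classical
  have hes' := nodup_of_map_ends_eq_edges hp hes
  have hfs' := nodup_of_map_ends_eq_edges hq hfs
  have hchain : (es ++ fs.reverse).IsChain (· ≠ ·) := by
    refine List.isChain_append.2 ⟨List.Pairwise.isChain hes',
      List.Pairwise.isChain (List.nodup_reverse.2 hfs'), fun e he f hf hef => hlast ?_⟩
    rw [List.head?_reverse] at hf
    rw [Option.mem_def.1 he, Option.mem_def.1 hf, hef]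
  refine ⟨start_ofSimpleWalk .., finish_ofSimpleWalk .., fun i hi0 hil his => ?_, fun i j hij => ?_,
    fun e => ?_⟩
  · have hi : (i : ℕ) < p.length + q.length + 1 := by simpa [ofSimpleWalk] using i.2
    have hi0 : (i : ℕ) ≠ 0 := fun h => hi0 (Fin.ext h)
    have hil : (i : ℕ) ≠ p.length + q.length := fun h => hil (Fin.ext (by simp [h, ofSimpleWalk]))
    simp only [ofSimpleWalk, SimpleGraph.Walk.getVert_append,
      SimpleGraph.Walk.getVert_reverse] at his
    split_ifs at his with h
    · exact hi0 ((hp.getVert_eq_start_iff h.le).1 his)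
    · have := (hq.getVert_eq_start_iff (Nat.sub_le _ _)).1 his
      omega
  · have h := List.isChain_iff_getElem.1 hchain i
    simpa only [ofSimpleWalk, Fin.getElem_fin, hij] using h (by
      rw [length_eq_of_map_ends_eq_edges (map_ends_append_reverse hes hfs), hij]; exact j.2)
  · calc Nat.card {i : Fin (p.append q.reverse).length // (es ++ fs.reverse)[i]'_ = e}
        = (es ++ fs.reverse).count e := card_getElem_eq_count
          (length_eq_of_map_ends_eq_edges (map_ends_append_reverse hes hfs)) e
      _ = es.count e + fs.count e := by rw [List.count_append, List.count_reverse]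
      _ ≤ 1 + 1 := Nat.add_le_add (List.nodup_iff_count_le_one.1 hes' e)
          (List.nodup_iff_count_le_one.1 hfs' e)

/-! ### Components of induced subgraphs -/

/-- The underlying simple graph of `G[Y]`, on all of `V`: vertices outside `Y` are isolated, and
loops and multiplicities of edges are forgotten. -/
def simpleGraphOn (G : Multigraph V E) (Y : Set V) : SimpleGraph V where
  Adj u v := u ≠ v ∧ u ∈ Y ∧ v ∈ Y ∧ ∃ e, G.ends e = s(u, v)
  symm := ⟨fun _ _ ⟨hne, hu, hv, e, he⟩ => ⟨hne.symm, hv, hu, e, he.trans Sym2.eq_swap⟩⟩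
  loopless := ⟨fun _ h => h.1 rfl⟩

theorem simpleGraphOn_mono (h : Y ⊆ Z) : G.simpleGraphOn Y ≤ G.simpleGraphOn Z :=
  fun _ _ ⟨hne, hu, hv, he⟩ => ⟨hne, h hu, h hv, he⟩

theorem exists_map_ends_eq_edges (p : (G.simpleGraphOn Y).Walk u v) :
    ∃ es : List E, es.map G.ends = p.edges := by
  rw [← Set.mem_range, Set.range_list_map]
  intro a ha
  induction a with
  | h a b => exact (p.adj_of_mem_edges ha).2.2.2

/-- The vertices of the connected component of `s` in `G[Y]`; it is empty if `s ∉ Y`. -/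
def component (G : Multigraph V E) (Y : Set V) (s : V) : Set V :=
  {v ∈ Y | (G.simpleGraphOn Y).Reachable s v}

theorem component_subset : G.component Y s ⊆ Y := fun _ hv => hv.1

theorem mem_component_self (hs : s ∈ Y) : s ∈ G.component Y s := ⟨hs, .refl s⟩

theorem mem_iff_of_reachable (h : (G.simpleGraphOn Y).Reachable u v) : u ∈ Y ↔ v ∈ Y := by
  obtain ⟨p⟩ := h
  induction p with
  | nil => rfl
  | cons hadj _ ih => exact ⟨fun _ => ih.1 hadj.2.2.1, fun _ => hadj.2.1⟩

theorem mem_component_of_mem_support {p : (G.simpleGraphOn Y).Walk s u}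
    (hu : u ∈ Y) (hw : w ∈ p.support) : w ∈ G.component Y s := by
  classical
  exact ⟨(mem_iff_of_reachable ⟨p.dropUntil w hw⟩).2 hu, ⟨p.takeUntil w hw⟩⟩

theorem mem_component_of_support_subset (p : (G.simpleGraphOn Y).Walk s u)
    (h : ∀ w ∈ p.support, w ∈ Z) : u ∈ G.component Z s := by
  refine ⟨h u p.end_mem_support, ⟨p.transfer _ fun a ha => ?_⟩⟩
  induction a with
  | h a b =>
    obtain ⟨hne, -, -, he⟩ := p.adj_of_mem_edges ha
    exact ⟨hne, h a (p.fst_mem_support_of_mem_edges ha),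
      h b (p.snd_mem_support_of_mem_edges ha), he⟩

theorem component_subset_component (h : G.component Y s ⊆ Z) :
    G.component Y s ⊆ G.component Z s :=
  fun _ ⟨hv, ⟨p⟩⟩ => mem_component_of_support_subset p fun _ hw =>
    h (mem_component_of_mem_support hv hw)

/-- A vertex of `K` farthest from `s` in `G[Y]` does the job: a shortest path from `s` to another
vertex of `K` cannot pass through it. -/
theorem exists_forall_mem_component_diff_singleton {K : Set V} (hfin : K.Finite)
    (hne : K.Nonempty) (hK : K ⊆ G.component Y s) :
    ∃ v ∈ K, ∀ u ∈ K, u ≠ v → u ∈ G.component (Y \ {v}) s := by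
  classical
  obtain ⟨v, hvK, hmax⟩ := hfin.exists_maximalFor ((G.simpleGraphOn Y).dist s) K hne
  refine ⟨v, hvK, fun u huK huv => ?_⟩
  obtain ⟨huY, hu⟩ := hK huK
  obtain ⟨p, hp⟩ := hu.exists_walk_length_eq_dist
  have hvp : v ∉ p.support := fun hv => by
    have hlt := p.length_takeUntil_lt_length hv huv.symm
    have hle := SimpleGraph.dist_le (p.takeUntil v hv)
    have := hmax huK (by omega)
    omega
  refine mem_component_of_support_subset p fun w hw => ⟨?_, fun hwv => hvp (hwv ▸ hw)⟩
  exact component_subset (mem_component_of_mem_support huY hw)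

/-- The edges of `G` joining `v` to a vertex of `Y`. -/
def edgesTo (G : Multigraph V E) (Y : Set V) (v : V) : Set E :=
  {e | ∃ u ∈ Y, G.ends e = s(u, v)}

theorem edgesTo_mono (h : Y ⊆ Z) : G.edgesTo Y v ⊆ G.edgesTo Z v :=
  fun _ ⟨u, hu, he⟩ => ⟨u, h hu, he⟩

theorem mem_component_of_nonempty_edgesTo (hv : v ∈ Y)
    (h : (G.edgesTo (G.component Y s) v).Nonempty) : v ∈ G.component Y s := by
  obtain ⟨e, u, ⟨huY, hu⟩, he⟩ := h
  by_cases huv : u = v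
  · exact huv ▸ ⟨huY, hu⟩
  · exact ⟨hv, hu.trans (SimpleGraph.Adj.reachable ⟨huv, huY, hv, e, he⟩)⟩

theorem exists_isPath_of_mem_component (hu : u ∈ G.component Y s) (hv : v ∉ G.component Y s)
    {e : E} (he : G.ends e = s(u, v)) :
    ∃ (p : (G.simpleGraphOn (insert v Y)).Walk s v) (es : List E) (vs : List V), p.IsPath ∧
      (es ++ [e]).map G.ends = p.edges ∧ p.support = vs ++ [v] ∧ ∀ w ∈ vs, w ∈ G.component Y s := by
  obtain ⟨p, hp⟩ := hu.2.exists_isPath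
  obtain ⟨es, hes⟩ := exists_map_ends_eq_edges p
  have hsupp : ∀ w ∈ p.support, w ∈ G.component Y s :=
    fun w hw => mem_component_of_mem_support hu.1 hw
  have hadj : (G.simpleGraphOn (insert v Y)).Adj u v :=
    ⟨fun h => hv (h ▸ hu), Set.mem_insert_of_mem v hu.1, Set.mem_insert v Y, e, he⟩
  refine ⟨(p.mapLe (simpleGraphOn_mono (Set.subset_insert v Y))).concat hadj, es, p.support,
    (hp.mapLe _).concat (by simpa using fun h => hv (hsupp v h)) hadj, ?_, ?_, hsupp⟩
  · simp [hes, he, SimpleGraph.Walk.edges_concat]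
  · simp [SimpleGraph.Walk.support_concat]

theorem IsSCycleCover.one_le_of_nontrivial_edgesTo (hx : G.IsSCycleCover s x)
    (h0 : ∀ w ∈ G.component Y s, x w = 0) (hv : v ∉ G.component Y s)
    (h : (G.edgesTo (G.component Y s) v).Nontrivial) : 1 ≤ x v := by
  obtain ⟨e, ⟨u, hu, he⟩, f, ⟨w, hw, hf⟩, hne⟩ := h
  obtain ⟨p, es, us, hp, hes, hpsupp, hus⟩ := exists_isPath_of_mem_component hu hv he
  obtain ⟨q, fs, ws, hq, hfs, hqsupp, hws⟩ := exists_isPath_of_mem_component hw hv hf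
  have hlen : 0 < (p.append q.reverse).length := by
    have hes_length : es.length + 1 = p.length := by
      simpa using length_eq_of_map_ends_eq_edges hes
    rw [SimpleGraph.Walk.length_append]
    omega
  have hC := hx.2.2 _ (Walk.isSCycle_ofSimpleWalk_append_reverse hp hq hes hfs
    (by simpa using hne) hlen)
  have hsum : ∀ l : List V, (∀ w ∈ l, w ∈ G.component Y s) → (l.map x).sum = 0 := fun l hl =>
    List.sum_eq_zero (by simpa using fun w hw => h0 w (hl w hw))
  rw [Walk.sum_verts_ofSimpleWalk, SimpleGraph.Walk.support_append,
    SimpleGraph.Walk.support_reverse, hpsupp, hqsupp] at hC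
  simpa [hsum us hus, hsum ws hws] using hC

theorem exists_isCycle_of_nontrivial_edgesTo (hv : v ∉ G.component Y s)
    (h : (G.edgesTo (G.component Y s) v).Nontrivial) :
    ∃ W : G.Walk, W.IsCycle ∧ ∀ i, W.verts i ∈ insert v (G.component Y s) := by
  obtain ⟨e, ⟨u, hu, he⟩, f, ⟨w, hw, hf⟩, hne⟩ := h
  obtain ⟨q, hq⟩ := (hu.2.symm.trans hw.2).exists_isPath
  obtain ⟨es, hes⟩ := exists_map_ends_eq_edges q
  have hsupp : ∀ a ∈ q.support, a ∈ G.component Y s := fun a ha =>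
    have ha' := mem_component_of_mem_support hw.1 ha
    ⟨ha'.1, hu.2.trans ha'.2⟩
  have hvq : v ∉ q.support := fun h => hv (hsupp v h)
  have hfes : ∀ g ∈ es, v ∉ G.ends g := fun g hg hvg =>
    hvq (q.mem_support_of_mem_edges (hes ▸ List.mem_map_of_mem hg) hvg)
  have hvu : (G.simpleGraphOn (insert v Y)).Adj v u :=
    ⟨fun h => hv (h ▸ hu), .inl rfl, .inr hu.1, e, he.trans Sym2.eq_swap⟩
  have hwv : (G.simpleGraphOn (insert v Y)).Adj w v :=
    ⟨fun h => hv (h ▸ hw), .inr hw.1, .inl rfl, f, hf⟩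
  let p := SimpleGraph.Walk.cons hvu
    ((q.mapLe (simpleGraphOn_mono (Set.subset_insert v Y))).concat hwv)
  have hpe : (e :: es.concat f).map G.ends = p.edges := by
    simp [p, hes, he, hf, SimpleGraph.Walk.edges_concat, Sym2.eq_swap]
  have hps : p.support = v :: (q.support ++ [v]) := by
    simp [p, SimpleGraph.Walk.support_concat]
  refine ⟨Walk.ofSimpleWalk p _ hpe (by simp [p]), Walk.isCycle_ofSimpleWalk hpe _ ?_ ?_,
    fun i => ?_⟩
  · have hees : e ∉ es := fun h => hfes e h (he ▸ Sym2.mem_mk_right u v)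
    have hffs : f ∉ es := fun h => hfes f h (hf ▸ Sym2.mem_mk_right w v)
    exact List.nodup_cons.2 ⟨by simp [hees, hne],
      (List.nodup_concat es f).2 ⟨hffs, nodup_of_map_ends_eq_edges hq hes⟩⟩
  · rw [hps, ← List.cons_append, List.dropLast_concat]
    exact List.nodup_cons.2 ⟨hvq, hq.support_nodup⟩
  · have hi : p.getVert i ∈ v :: (q.support ++ [v]) := hps ▸ p.getVert_mem_support i
    simp only [List.mem_cons, List.mem_append, List.not_mem_nil, or_false] at hi
    rcases hi with hi | hi | hi
    exacts [.inl hi, .inr (hsupp _ hi), .inl hi]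

theorem IsFVS.mem_of_nontrivial_edgesTo (hT : G.IsFVS T)
    (hY : Disjoint Y T) (hv : v ∉ G.component Y s)
    (h : (G.edgesTo (G.component Y s) v).Nontrivial) : v ∈ T := by
  obtain ⟨W, hW, hWv⟩ := exists_isCycle_of_nontrivial_edgesTo hv h
  obtain ⟨i, hi⟩ := hT W hW
  rcases hWv i with hiv | hiY
  · exact hiv ▸ hi
  · exact absurd hi (hY.notMem_of_mem_left (component_subset hiY))

theorem Walk.IsCycle.nontrivial_edgesTo {W : G.Walk} (hW : W.IsCycle) (hloop : G.LoopFree)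
    (hv : v ∈ Set.range W.verts) : (G.edgesTo (Set.range W.verts \ {v}) v).Nontrivial := by
  obtain ⟨hclosed, hedges, -⟩ := hW
  obtain ⟨k, hk⟩ : ∃ k : Fin W.len, W.verts k.castSucc = v := by
    obtain ⟨i, rfl⟩ := hv
    induction i using Fin.lastCases with
    | last => exact ⟨⟨0, W.len_pos⟩, hclosed⟩
    | cast i => exact ⟨i, rfl⟩
  obtain ⟨l, hl⟩ : ∃ l : Fin W.len, W.verts l.succ = v := by
    obtain ⟨i, rfl⟩ := hv
    induction i using Fin.cases with
    | zero => exact ⟨⟨W.len - 1, Nat.sub_lt W.len_pos Nat.one_pos⟩, by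
        rw [← Walk.start, hclosed]
        exact congrArg W.verts (Fin.ext (Nat.sub_add_cancel W.len_pos))⟩
    | succ i => exact ⟨i, rfl⟩
  have hk' : W.verts k.succ ≠ v := fun h => hloop (W.edges k) (by rw [W.valid k, hk, h]; simp)
  have hl' : W.verts l.castSucc ≠ v := fun h => hloop (W.edges l) (by rw [W.valid l, hl, h]; simp)
  refine ⟨W.edges k, ⟨W.verts k.succ, ⟨⟨_, rfl⟩, hk'⟩, ?_⟩,
    W.edges l, ⟨W.verts l.castSucc, ⟨⟨_, rfl⟩, hl'⟩, ?_⟩, fun h => ?_⟩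
  · rw [W.valid k, hk, Sym2.eq_swap]
  · rw [W.valid l, hl]
  · exact hk' (hedges h ▸ hl)

theorem disjoint_edgesTo (h : Disjoint Y Z) : Disjoint (G.edgesTo Y v) (G.edgesTo Z v) := by
  rw [Set.disjoint_left]
  rintro e ⟨u, hu, hue⟩ ⟨w, hw, hwe⟩
  obtain rfl : u = w := Sym2.congr_left.1 (hue.symm.trans hwe)
  exact h.notMem_of_mem_left hu hw

/-! ### The boundary cover -/

open Classical in
/-- The half-integral function supported on the outer boundary of `D` with value `1` on the vertices
having at least two edges to `D` and value `1/2` on those having exactly one. -/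
noncomputable def boundaryCover (G : Multigraph V E) (D : Set V) (v : V) : ℝ :=
  if v ∈ D then 0
  else if (G.edgesTo D v).Nontrivial then 1
  else if (G.edgesTo D v).Nonempty then 1 / 2
  else 0

theorem boundaryCover_of_mem (hv : v ∈ D) : G.boundaryCover D v = 0 := if_pos hv

theorem boundaryCover_nonneg : 0 ≤ G.boundaryCover D v := by
  unfold boundaryCover
  split_ifs <;> norm_num

theorem half_le_boundaryCover (hv : v ∉ D) (h : (G.edgesTo D v).Nonempty) :
    1 / 2 ≤ G.boundaryCover D v := by
  unfold boundaryCover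
  split_ifs <;> norm_num

theorem boundaryCover_of_nontrivial (hv : v ∉ D) (h : (G.edgesTo D v).Nontrivial) :
    G.boundaryCover D v = 1 := by
  rw [boundaryCover, if_neg hv, if_pos h]

theorem boundaryCover_le_half (h : ¬ (G.edgesTo D v).Nontrivial) :
    G.boundaryCover D v ≤ 1 / 2 := by
  unfold boundaryCover
  split_ifs <;> norm_num

theorem boundaryCover_of_not_nonempty (h : ¬ (G.edgesTo D v).Nonempty) :
    G.boundaryCover D v = 0 := by
  rw [boundaryCover, if_neg (mt Set.Nontrivial.nonempty h), if_neg h, ite_self]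

theorem Walk.exists_castSucc_mem_succ_notMem {W : G.Walk} (hstart : W.start ∈ D)
    (h : ∃ i, W.verts i ∉ D) : ∃ i : Fin W.len, W.verts i.castSucc ∈ D ∧ W.verts i.succ ∉ D := by
  by_contra! hstep
  obtain ⟨i, hi⟩ := h
  induction i using Fin.induction with
  | zero => exact hi hstart
  | succ i ih => exact ih fun hD => hi (hstep i hD)

theorem Walk.exists_castSucc_notMem_succ_mem {W : G.Walk} (hfinish : W.finish ∈ D)
    (h : ∃ i, W.verts i ∉ D) : ∃ i : Fin W.len, W.verts i.castSucc ∉ D ∧ W.verts i.succ ∈ D := by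
  by_contra! hstep
  obtain ⟨i, hi⟩ := h
  induction i using Fin.reverseInduction with
  | last => exact hi hfinish
  | cast i ih => exact ih (hstep i hi)

theorem IsSCycleCover.boundaryCover (hx : G.IsSCycleCover s x) (hs : s ∈ D)
    (h0 : ∀ v ∈ D, x v = 0) : G.IsSCycleCover s (G.boundaryCover D) := by
  refine ⟨fun _ => boundaryCover_nonneg, boundaryCover_of_mem hs, fun W hW => ?_⟩
  have hout : ∃ i, W.verts i ∉ D := by
    by_contra! hin
    have hsum := hx.2.2 W hW
    rw [Finset.sum_eq_zero fun i _ => h0 _ (hin i)] at hsum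
    exact absurd hsum (by norm_num)
  obtain ⟨i, hi, hi'⟩ := Walk.exists_castSucc_mem_succ_notMem (hW.1 ▸ hs) hout
  obtain ⟨j, hj, hj'⟩ := Walk.exists_castSucc_notMem_succ_mem (hW.2.1 ▸ hs) hout
  have hei : W.edges i ∈ G.edgesTo D (W.verts i.succ) := ⟨_, hi, W.valid i⟩
  have hej : W.edges j ∈ G.edgesTo D (W.verts j.castSucc) :=
    ⟨_, hj', (W.valid j).trans Sym2.eq_swap⟩
  have hnonneg : ∀ k ∈ Finset.univ, 0 ≤ G.boundaryCover D (W.verts k) :=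
    fun _ _ => boundaryCover_nonneg
  by_cases hij : i.succ = j.castSucc
  · have hne : W.edges i ≠ W.edges j := hW.2.2.2.1 i j (congrArg Fin.val hij)
    have hnontriv : (G.edgesTo D (W.verts i.succ)).Nontrivial := ⟨_, hei, _, hij ▸ hej, hne⟩
    calc 1 = G.boundaryCover D (W.verts i.succ) := (boundaryCover_of_nontrivial hi' hnontriv).symm
      _ ≤ ∑ k, G.boundaryCover D (W.verts k) :=
        Finset.single_le_sum hnonneg (Finset.mem_univ i.succ)
  · calc (1 : ℝ) = 1 / 2 + 1 / 2 := (add_halves 1).symm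
      _ ≤ G.boundaryCover D (W.verts i.succ) + G.boundaryCover D (W.verts j.castSucc) :=
        add_le_add (half_le_boundaryCover hi' ⟨_, hei⟩) (half_le_boundaryCover hj ⟨_, hej⟩)
      _ ≤ ∑ k, G.boundaryCover D (W.verts k) :=
        Finset.add_le_sum hnonneg (Finset.mem_univ _) (Finset.mem_univ _) hij

/-! ### The exchange argument -/

/-- The connected component of `s` in the subgraph induced by the zeros of `x`. -/
def zeroComponent (G : Multigraph V E) (s : V) (x : V → ℝ) : Set V :=
  G.component (x ⁻¹' {0}) s

/-- The connected component of `s` that remains of the zero component once `T` is deleted. -/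
def uncutComponent (G : Multigraph V E) (s : V) (x : V → ℝ) (T : Set V) : Set V :=
  G.component (G.zeroComponent s x \ T) s

/-- The set obtained from a feedback vertex set `T` by trading its vertices in the zero component
for `x⁻¹(1)` and the outer neighbours of the part of the zero component that `T` cuts off. -/
def exchange (G : Multigraph V E) (s : V) (x : V → ℝ) (T : Set V) : Set V :=
  T \ G.zeroComponent s x ∪ x ⁻¹' {1} ∪
    {v | v ∉ G.zeroComponent s x ∧
      (G.edgesTo (G.zeroComponent s x \ G.uncutComponent s x T) v).Nonempty}

theorem eq_zero_of_mem_zeroComponent (hv : v ∈ G.zeroComponent s x) : x v = 0 :=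
  component_subset (Y := x ⁻¹' {0}) hv

theorem uncutComponent_subset : G.uncutComponent s x T ⊆ G.zeroComponent s x \ T :=
  component_subset

theorem uncutComponent_subset_zeroComponent : G.uncutComponent s x T ⊆ G.zeroComponent s x :=
  uncutComponent_subset.trans Set.sdiff_subset

theorem notMem_exchange_of_mem_zeroComponent (hv : v ∈ G.zeroComponent s x) :
    v ∉ G.exchange s x T := by
  rintro ((hvT | hv1) | hvR)
  · exact hvT.2 hv
  · exact zero_ne_one ((eq_zero_of_mem_zeroComponent hv).symm.trans hv1)
  · exact hvR.1 hv

theorem mem_of_nonempty_edgesTo_uncutComponent (hv : v ∈ G.zeroComponent s x)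
    (hvD : v ∉ G.uncutComponent s x T) (h : (G.edgesTo (G.uncutComponent s x T) v).Nonempty) :
    v ∈ T := by
  by_contra hvT
  exact hvD (mem_component_of_nonempty_edgesTo ⟨hv, hvT⟩ h)

theorem IsFVS.mem_of_nontrivial_edgesTo_uncutComponent (hT : G.IsFVS T)
    (hv : v ∉ G.uncutComponent s x T)
    (h : (G.edgesTo (G.uncutComponent s x T) v).Nontrivial) : v ∈ T :=
  hT.mem_of_nontrivial_edgesTo Set.disjoint_sdiff_left hv h

theorem IsSCycleCover.one_le_of_nontrivial_edgesTo_uncutComponent (hx : G.IsSCycleCover s x)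
    (hv : v ∉ G.uncutComponent s x T)
    (h : (G.edgesTo (G.uncutComponent s x T) v).Nontrivial) : 1 ≤ x v :=
  hx.one_le_of_nontrivial_edgesTo
    (fun _ hw => eq_zero_of_mem_zeroComponent (uncutComponent_subset_zeroComponent hw)) hv h

theorem HalfIntegral.half_le_of_nonempty_edgesTo_zeroComponent (hhalf : HalfIntegral x)
    (hv : v ∉ G.zeroComponent s x) (h : (G.edgesTo (G.zeroComponent s x) v).Nonempty) :
    1 / 2 ≤ x v := by
  rcases hhalf v with h0 | h0 | h0
  · exact absurd (mem_component_of_nonempty_edgesTo (Y := x ⁻¹' {0}) h0 h) hv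
  all_goals norm_num [h0]

theorem IsFVS.exchange (hT : G.IsFVS T) (hloop : G.LoopFree) (hx : G.IsSCycleCover s x) :
    G.IsFVS (G.exchange s x T) := by
  intro W hW
  by_contra! havoid
  let K := Set.range W.verts ∩ (G.zeroComponent s x \ G.uncutComponent s x T)
  have hKne : K.Nonempty := by
    obtain ⟨i, hi⟩ := hT W hW
    refine ⟨W.verts i, ⟨i, rfl⟩, ?_, fun hD => (uncutComponent_subset hD).2 hi⟩
    by_contra hR
    exact havoid i (.inl (.inl ⟨hi, hR⟩))
  obtain ⟨v, ⟨hvW, hvR, hvD⟩, hv⟩ := exists_forall_mem_component_diff_singleton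
    ((Set.finite_range W.verts).inter_of_left _) hKne fun _ h => h.2.1
  have hDA : G.uncutComponent s x T ⊆ G.component (x ⁻¹' {0} \ {v}) s :=
    component_subset_component fun w hw =>
      ⟨eq_zero_of_mem_zeroComponent (uncutComponent_subset_zeroComponent hw),
        fun hwv => hvD (hwv ▸ hw)⟩
  have hedges : G.edgesTo (Set.range W.verts \ {v}) v ⊆
      G.edgesTo (G.component (x ⁻¹' {0} \ {v}) s) v := by
    rintro e ⟨_, ⟨⟨i, rfl⟩, hiv⟩, he⟩
    have hiR : W.verts i ∈ G.zeroComponent s x := by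
      by_contra hiR
      exact havoid i (.inr ⟨hiR, e, v, ⟨hvR, hvD⟩, he.trans Sym2.eq_swap⟩)
    by_cases hiD : W.verts i ∈ G.uncutComponent s x T
    · exact ⟨_, hDA hiD, he⟩
    · exact ⟨_, hv _ ⟨⟨i, rfl⟩, hiR, hiD⟩ hiv, he⟩
  have hxv : 1 ≤ x v := hx.one_le_of_nontrivial_edgesTo (fun _ hw => (component_subset hw).1)
    (fun h => (component_subset h).2 rfl) ((hW.nontrivial_edgesTo hloop hvW).mono hedges)
  exact absurd (eq_zero_of_mem_zeroComponent hvR) (zero_lt_one.trans_le hxv).ne'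

theorem boundaryCover_uncutComponent_le_indicator (hx : G.IsSCycleCover s x)
    (hv : v ∈ G.zeroComponent s x) :
    G.boundaryCover (G.uncutComponent s x T) v ≤ T.indicator 1 v / 2 := by
  by_cases hvD : v ∈ G.uncutComponent s x T
  · rw [boundaryCover_of_mem hvD]
    exact div_nonneg (Set.indicator_nonneg (fun _ _ => zero_le_one) v) zero_le_two
  by_cases hvT : v ∈ T
  · rw [Set.indicator_of_mem hvT]
    refine boundaryCover_le_half fun h => ?_
    have := hx.one_le_of_nontrivial_edgesTo_uncutComponent hvD h
    exact absurd (eq_zero_of_mem_zeroComponent hv) (by linarith)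
  · rw [boundaryCover_of_not_nonempty fun h =>
      hvT (mem_of_nonempty_edgesTo_uncutComponent hv hvD h), Set.indicator_of_notMem hvT, zero_div]

theorem boundaryCover_uncutComponent_le (hx : G.IsSCycleCover s x)
    (hhalf : HalfIntegral x) (hv : v ∉ G.zeroComponent s x) :
    G.boundaryCover (G.uncutComponent s x T) v ≤ x v := by
  have hvD : v ∉ G.uncutComponent s x T := fun h => hv (uncutComponent_subset_zeroComponent h)
  by_cases h2 : (G.edgesTo (G.uncutComponent s x T) v).Nontrivial
  · rw [boundaryCover_of_nontrivial hvD h2]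
    exact hx.one_le_of_nontrivial_edgesTo_uncutComponent hvD h2
  by_cases h1 : (G.edgesTo (G.uncutComponent s x T) v).Nonempty
  · exact (boundaryCover_le_half h2).trans (hhalf.half_le_of_nonempty_edgesTo_zeroComponent hv
      (h1.mono (edgesTo_mono uncutComponent_subset_zeroComponent)))
  · rw [boundaryCover_of_not_nonempty h1]
    exact hx.1 v

theorem boundaryCover_uncutComponent_add_half_le (hT : G.IsFVS T) (hx : G.IsSCycleCover s x)
    (hhalf : HalfIntegral x) (hv : v ∉ G.zeroComponent s x) (hvT : v ∉ T)
    (hvS : v ∈ G.exchange s x T) :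
    G.boundaryCover (G.uncutComponent s x T) v + 1 / 2 ≤ x v := by
  have hvD : v ∉ G.uncutComponent s x T := fun h => hv (uncutComponent_subset_zeroComponent h)
  have hle : G.boundaryCover (G.uncutComponent s x T) v ≤ 1 / 2 :=
    boundaryCover_le_half fun h => hvT (hT.mem_of_nontrivial_edgesTo_uncutComponent hvD h)
  rcases lt_or_ge (x v) 1 with hlt | hge
  · have hcut : (G.edgesTo (G.zeroComponent s x \ G.uncutComponent s x T) v).Nonempty := by
      rcases hvS with (h | h) | h
      exacts [absurd h.1 hvT, absurd h hlt.ne, h.2]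
    have hD : ¬ (G.edgesTo (G.uncutComponent s x T) v).Nonempty := by
      rintro ⟨e, he⟩
      obtain ⟨f, hf⟩ := hcut
      refine hlt.not_ge (hx.one_le_of_nontrivial_edgesTo
        (fun _ => eq_zero_of_mem_zeroComponent) hv ⟨e, ?_, f, ?_, ?_⟩)
      · exact edgesTo_mono uncutComponent_subset_zeroComponent he
      · exact edgesTo_mono Set.sdiff_subset hf
      · exact (disjoint_edgesTo Set.disjoint_sdiff_right).ne_of_mem he hf
    rw [boundaryCover_of_not_nonempty hD, zero_add]
    exact hhalf.half_le_of_nonempty_edgesTo_zeroComponent hv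
      (hcut.mono (edgesTo_mono Set.sdiff_subset))
  · linarith

theorem indicator_exchange_sub_indicator_le (hT : G.IsFVS T) (hx : G.IsSCycleCover s x)
    (hhalf : HalfIntegral x) (v : V) :
    (G.exchange s x T).indicator 1 v - T.indicator 1 v ≤
      2 * (x v - G.boundaryCover (G.uncutComponent s x T) v) := by
  by_cases hv : v ∈ G.zeroComponent s x
  · have := boundaryCover_uncutComponent_le_indicator (T := T) hx hv
    rw [Set.indicator_of_notMem (notMem_exchange_of_mem_zeroComponent hv),
      eq_zero_of_mem_zeroComponent hv]
    linarith
  have hle := boundaryCover_uncutComponent_le (T := T) hx hhalf hv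
  by_cases hvS : v ∈ G.exchange s x T <;> by_cases hvT : v ∈ T
  · rw [Set.indicator_of_mem hvS, Set.indicator_of_mem hvT]
    linarith
  · have := boundaryCover_uncutComponent_add_half_le hT hx hhalf hv hvT hvS
    rw [Set.indicator_of_mem hvS, Set.indicator_of_notMem hvT, Pi.one_apply]
    linarith
  · rw [Set.indicator_of_notMem hvS, Set.indicator_of_mem hvT, Pi.one_apply]
    linarith
  · rw [Set.indicator_of_notMem hvS, Set.indicator_of_notMem hvT]
    linarith

theorem sum_indicator_one_eq_ncard [Fintype V] (A : Set V) :
    ∑ v, A.indicator (1 : V → ℝ) v = A.ncard := by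
  classical
  rw [Set.ncard_eq_toFinset_card', ← Set.filter_mem_univ_eq_toFinset]
  simp [Set.indicator_apply]

theorem IsFVS.ncard_exchange_le [Fintype V] (hT : G.IsFVS T) (hs : s ∉ T)
    (hx : G.IsMinSCycleCover s x) (hhalf : HalfIntegral x) :
    (G.exchange s x T).ncard ≤ T.ncard := by
  have hsD : s ∈ G.uncutComponent s x T :=
    mem_component_self ⟨mem_component_self hx.1.2.1, hs⟩
  have hmin := hx.2 _ (hx.1.boundaryCover hsD fun v hv =>
    eq_zero_of_mem_zeroComponent (uncutComponent_subset_zeroComponent hv))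
  have hsum := Finset.sum_le_sum fun v (_ : v ∈ Finset.univ) =>
    indicator_exchange_sub_indicator_le hT hx.1 hhalf v
  rw [Finset.sum_sub_distrib, ← Finset.mul_sum, Finset.sum_sub_distrib,
    sum_indicator_one_eq_ncard, sum_indicator_one_eq_ncard] at hsum
  rw [← Nat.cast_le (α := ℝ)]
  linarith

end Multigraph

theorem stmt4_persistency_general {V E : Type} [Fintype V] (G : Multigraph V E)
    (hloop : G.LoopFree) (s : V) (T : Set V) (hT : G.IsFVS T) (hs : s ∉ T)
    (x : V → ℝ) (hx : G.IsMinSCycleCover s x) (hhalf : Multigraph.HalfIntegral x) :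
    ∃ S : Set V, G.IsFVS S ∧ S.ncard ≤ T.ncard ∧ (∀ v : V, x v = 1 → v ∈ S) ∧ s ∉ S :=
  ⟨G.exchange s x T, hT.exchange hloop hx.1, hT.ncard_exchange_le hs hx hhalf,
    fun _ hv => .inl (.inr hv),
    Multigraph.notMem_exchange_of_mem_zeroComponent (Multigraph.mem_component_self hx.1.2.1)⟩

/-- persistency: if some minimum feedback vertex set avoids `s`,
then for every half-integral minimum `s`-cycle cover `x` there is a minimum
feedback vertex set `S` with `x⁻¹(1) ⊆ S` and `s ∉ S`. -/
theorem stmt4_persistency {V E : Type} [Fintype V] (G : Multigraph V E)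
    (hloop : G.LoopFree) (s : V)
    (hmin : ∃ T : Set V, G.IsFVS T ∧ s ∉ T ∧
      ∀ T' : Set V, G.IsFVS T' → T.ncard ≤ T'.ncard)
    (x : V → ℝ) (hx : G.IsMinSCycleCover s x) (hhalf : Multigraph.HalfIntegral x) :
    ∃ S : Set V, G.IsFVS S ∧ (∀ T' : Set V, G.IsFVS T' → S.ncard ≤ T'.ncard) ∧
      (∀ v : V, x v = 1 → v ∈ S) ∧ s ∉ S := by
  obtain ⟨T, hT, hs, hTmin⟩ := hmin
  obtain ⟨S, hS, hST, hxS, hsS⟩ := stmt4_persistency_general G hloop s T hT hs x hx hhalf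
  exact ⟨S, hS, fun T' hT' => hST.trans (hTmin T' hT'), hxS, hsS⟩
end

section
/- Let G=(V,E) be a multigraph without self-loops, let s ∈ V, and let k ≥ 1 be an integer. If the minimum size of an s-cycle cover of G is greater than k, then every feedback vertex set of G of size at most k contains s; consequently, G has a feedback vertex set of size at most k if and only if G − s has a feedback vertex set of size at most k − 1. -/
/-!
The indicator function of a feedback vertex set `S` avoiding `s` is an `s`-cycle cover of size
`|S|`, because every closed walk without U-turns contains a cycle: cutting such a walk at a repeated
vertex leaves a shorter closed walk without U-turns, and once no vertex repeats, no edge does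
either. So if all `s`-cycle covers have size greater than `k`, no feedback vertex set of size at
most `k` avoids `s`, and those that contain `s` are the sets `insert s S` with `S` a feedback vertex
set of `G - s`.
-/

theorem sum_indicator_one_eq_ncard {α R : Type*} [Fintype α] [AddCommMonoidWithOne R]
    (S : Set α) : ∑ a, S.indicator (1 : α → R) a = S.ncard := by
  classical
  simp only [Set.indicator_apply, Pi.one_apply, Finset.sum_boole, Set.ncard_eq_toFinset_card',
    Set.filter_mem_univ_eq_toFinset]

namespace Multigraph

variable {V E : Type} {G : Multigraph V E} {s : V} {S : Set V}

namespace Walk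

/-- A walk without U-turns: consecutive edges are distinct. An `s`-cycle is in particular a
non-backtracking walk. Only interior vertices are tested, so a closed walk may end with the edge it
started with. -/
def IsNonBacktracking (W : G.Walk) : Prop :=
  ∀ i j : Fin W.len, (i : ℕ) + 1 = (j : ℕ) → W.edges i ≠ W.edges j

/-- The part of a walk between its `i`-th and its `j`-th vertex. It is used to cut a closed walk
down to a cycle; `i < j` is required because walks have positive length. -/
def segment (W : G.Walk) {i j : Fin (W.len + 1)} (hij : i < j) : G.Walk where
  len := j - i
  len_pos := Nat.sub_pos_of_lt hij
  verts t := W.verts ⟨i + t, by omega⟩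
  edges t := W.edges ⟨i + t, by omega⟩
  valid t := W.valid ⟨i + t, by omega⟩

theorem start_segment (W : G.Walk) {i j : Fin (W.len + 1)} (hij : i < j) :
    (W.segment hij).start = W.verts i :=
  rfl

theorem finish_segment (W : G.Walk) {i j : Fin (W.len + 1)} (hij : i < j) :
    (W.segment hij).finish = W.verts j :=
  congrArg W.verts (Fin.ext (Nat.add_sub_of_le hij.le))

theorem range_verts_segment_subset (W : G.Walk) {i j : Fin (W.len + 1)} (hij : i < j) :
    Set.range (W.segment hij).verts ⊆ Set.range W.verts :=
  Set.range_subset_iff.2 fun _ => Set.mem_range_self _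

theorem IsNonBacktracking.segment {W : G.Walk} (hW : W.IsNonBacktracking)
    {i j : Fin (W.len + 1)} (hij : i < j) : (W.segment hij).IsNonBacktracking :=
  fun _ _ hab => hW _ _ ((Nat.add_assoc _ _ _).trans (congrArg ((i : ℕ) + ·) hab))

theorem IsNonBacktracking.injective_edges {W : G.Walk} (hW : W.IsNonBacktracking)
    (hverts : Function.Injective fun i : Fin W.len => W.verts i.castSucc) :
    Function.Injective W.edges := by
  refine .of_lt_imp_ne fun i j hij hedge => ?_
  have hends : s(W.verts i.castSucc, W.verts i.succ) = s(W.verts j.castSucc, W.verts j.succ) := by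
    rw [← W.valid i, ← W.valid j, hedge]
  rcases Sym2.eq_iff.1 hends with ⟨heq, -⟩ | ⟨-, heq⟩
  · exact hij.ne (hverts heq)
  · have hlt : (i : ℕ) + 1 < W.len := by omega
    have hsucc : (⟨i + 1, hlt⟩ : Fin W.len) = j := hverts heq
    exact hW i j (congrArg Fin.val hsucc) hedge

theorem IsNonBacktracking.exists_isCycle {W : G.Walk} (hW : W.IsNonBacktracking)
    (hclosed : W.start = W.finish) :
    ∃ C : G.Walk, C.IsCycle ∧ Set.range C.verts ⊆ Set.range W.verts := by
  by_cases hverts : Function.Injective fun i : Fin W.len => W.verts i.castSucc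
  · exact ⟨W, ⟨hclosed, hW.injective_edges hverts, hverts⟩, subset_rfl⟩
  · obtain ⟨i, j, hij, heq⟩ : ∃ i j : Fin W.len, i < j ∧
        W.verts i.castSucc = W.verts j.castSucc := by
      contrapose! hverts
      exact .of_lt_imp_ne hverts
    have hlt : i.castSucc < j.castSucc := hij
    obtain ⟨C, hC, hCsub⟩ := (hW.segment hlt).exists_isCycle
      (by rw [start_segment, finish_segment, heq])
    exact ⟨C, hC, hCsub.trans (W.range_verts_segment_subset hlt)⟩
termination_by W.len
decreasing_by exact (Nat.sub_le _ _).trans_lt j.isLt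

theorem exists_verts_mem_ends (W : G.Walk) (t : Fin (W.len + 1)) :
    ∃ j, W.verts t ∈ G.ends (W.edges j) := by
  cases t using Fin.cases with
  | zero => exact ⟨⟨0, W.len_pos⟩, by rw [W.valid]; exact Sym2.mem_mk_left _ _⟩
  | succ j => exact ⟨j, by rw [W.valid]; exact Sym2.mem_mk_right _ _⟩

theorem verts_ne_of_deleteVertex (W : (G.deleteVertex s).Walk) (t : Fin (W.len + 1)) :
    W.verts t ≠ s := by
  intro ht
  obtain ⟨j, hj⟩ := W.exists_verts_mem_ends t
  rw [ht] at hj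
  exact (W.edges j).property hj

theorem notMem_ends_of_verts_ne {W : G.Walk} (hs : ∀ t, W.verts t ≠ s) (j : Fin W.len) :
    s ∉ G.ends (W.edges j) := by
  rw [W.valid j, Sym2.mem_iff]
  rintro (h | h) <;> exact hs _ h.symm

/-- A walk of `G - s`, regarded as a walk of `G`. -/
def ofDeleteVertex (W : (G.deleteVertex s).Walk) : G.Walk where
  len := W.len
  len_pos := W.len_pos
  verts := W.verts
  edges j := W.edges j
  valid := W.valid

/-- A walk of `G` that does not visit `s`, regarded as a walk of `G - s`. -/
def toDeleteVertex (W : G.Walk) (hs : ∀ t, W.verts t ≠ s) : (G.deleteVertex s).Walk where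
  len := W.len
  len_pos := W.len_pos
  verts := W.verts
  edges j := ⟨W.edges j, notMem_ends_of_verts_ne hs j⟩
  valid := W.valid

theorem IsCycle.ofDeleteVertex {W : (G.deleteVertex s).Walk} (hW : W.IsCycle) :
    W.ofDeleteVertex.IsCycle :=
  ⟨hW.1, Subtype.val_injective.comp hW.2.1, hW.2.2⟩

theorem IsCycle.toDeleteVertex {W : G.Walk} (hW : W.IsCycle) (hs : ∀ t, W.verts t ≠ s) :
    (W.toDeleteVertex hs).IsCycle :=
  ⟨hW.1, fun _ _ h => hW.2.1 (congrArg Subtype.val h), hW.2.2⟩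

end Walk

theorem IsFVS.exists_verts_mem (hS : G.IsFVS S) {W : G.Walk} (hW : W.IsNonBacktracking)
    (hclosed : W.start = W.finish) : ∃ t, W.verts t ∈ S := by
  obtain ⟨C, hC, hsub⟩ := hW.exists_isCycle hclosed
  obtain ⟨t, ht⟩ := hS C hC
  obtain ⟨t', ht'⟩ := hsub (Set.mem_range_self t)
  exact ⟨t', ht' ▸ ht⟩

theorem IsFVS.isSCycleCover_indicator (hS : G.IsFVS S) (hs : s ∉ S) :
    G.IsSCycleCover s (S.indicator 1) := by
  have hnonneg : ∀ v, 0 ≤ S.indicator (1 : V → ℝ) v :=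
    Set.indicator_nonneg fun _ _ => zero_le_one
  refine ⟨hnonneg, Set.indicator_of_notMem hs 1, ?_⟩
  rintro W ⟨hstart, hfinish, -, hW, -⟩
  obtain ⟨t, ht⟩ := hS.exists_verts_mem hW (hstart.trans hfinish.symm)
  calc (1 : ℝ) = S.indicator 1 (W.verts t) := (Set.indicator_of_mem ht 1).symm
    _ ≤ ∑ i, S.indicator 1 (W.verts i) :=
      Finset.single_le_sum (fun i _ => hnonneg (W.verts i)) (Finset.mem_univ t)

theorem IsFVS.mem_of_ncard_lt [Fintype V] (hS : G.IsFVS S)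
    (hlt : ∀ x : V → ℝ, G.IsSCycleCover s x → (S.ncard : ℝ) < ∑ v, x v) : s ∈ S := by
  by_contra hs
  exact (hlt _ (hS.isSCycleCover_indicator hs)).ne' (sum_indicator_one_eq_ncard S)

theorem isFVS_insert_iff : G.IsFVS (insert s S) ↔ (G.deleteVertex s).IsFVS S := by
  constructor
  · intro hS W hW
    obtain ⟨t, ht⟩ := hS _ hW.ofDeleteVertex
    exact ⟨t, ht.resolve_left (W.verts_ne_of_deleteVertex t)⟩
  · intro hS W hW
    by_cases hs : ∃ t, W.verts t = s
    · exact hs.imp fun _ ht => Or.inl ht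
    · obtain ⟨t, ht⟩ := hS _ (hW.toDeleteVertex (not_exists.1 hs))
      exact ⟨t, Or.inr ht⟩

theorem exists_isFVS_ncard_le_iff_deleteVertex {k : ℕ} (hk : 1 ≤ k)
    (hs : ∀ S : Set V, G.IsFVS S → S.ncard ≤ k → s ∈ S) :
    (∃ S : Set V, G.IsFVS S ∧ S.ncard ≤ k) ↔
      ∃ S : Set V, s ∉ S ∧ (G.deleteVertex s).IsFVS S ∧ S.ncard ≤ k - 1 := by
  constructor
  · rintro ⟨S, hS, hcard⟩
    have hsS : s ∈ S := hs S hS hcard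
    refine ⟨S \ {s}, Set.notMem_sdiff_of_mem rfl, isFVS_insert_iff.1 ?_, ?_⟩
    · rwa [Set.insert_sdiff_self_of_mem hsS]
    · rw [Set.ncard_sdiff_singleton_of_mem hsS]
      exact Nat.sub_le_sub_right hcard 1
  · rintro ⟨S, -, hS, hcard⟩
    refine ⟨insert s S, isFVS_insert_iff.2 hS, ?_⟩
    calc (insert s S).ncard ≤ S.ncard + 1 := Set.ncard_insert_le s S
      _ ≤ k := by omega

end Multigraph

theorem stmt5_remove_s_of_large_cover_general {V E : Type} [Fintype V] (G : Multigraph V E)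
    (s : V) (k : ℕ) (hk : 1 ≤ k)
    (hbig : ∀ x : V → ℝ, G.IsSCycleCover s x → (k : ℝ) < ∑ v, x v) :
    (∀ S : Set V, G.IsFVS S → S.ncard ≤ k → s ∈ S) ∧
    ((∃ S : Set V, G.IsFVS S ∧ S.ncard ≤ k) ↔
      (∃ S : Set V, s ∉ S ∧ (G.deleteVertex s).IsFVS S ∧ S.ncard ≤ k - 1)) := by
  have hmem : ∀ S : Set V, G.IsFVS S → S.ncard ≤ k → s ∈ S := fun S hS hcard =>
    hS.mem_of_ncard_lt fun x hx => (Nat.cast_le.2 hcard).trans_lt (hbig x hx)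
  exact ⟨hmem, Multigraph.exists_isFVS_ncard_le_iff_deleteVertex hk hmem⟩

/-- if every `s`-cycle cover has size greater than `k`, then
every feedback vertex set of size at most `k` contains `s`; consequently `G`
has a feedback vertex set of size at most `k` iff `G − s` has one of size at
most `k − 1`. -/
theorem stmt5_remove_s_of_large_cover {V E : Type} [Fintype V] (G : Multigraph V E)
    (hloop : G.LoopFree) (s : V) (k : ℕ) (hk : 1 ≤ k)
    (hbig : ∀ x : V → ℝ, G.IsSCycleCover s x → (k : ℝ) < ∑ v, x v) :
    (∀ S : Set V, G.IsFVS S → S.ncard ≤ k → s ∈ S) ∧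
    ((∃ S : Set V, G.IsFVS S ∧ S.ncard ≤ k) ↔
      (∃ S : Set V, s ∉ S ∧ (G.deleteVertex s).IsFVS S ∧ S.ncard ≤ k - 1)) :=
  stmt5_remove_s_of_large_cover_general G s k hk hbig
end
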